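/- arXiv:2511.03606 — 2 statements merged into one kernel-verified Lean document; each statement's English description precedes it below -/
import Mathlib

section
/- Fix an integer n ≥ 1. Suppose |ε_t| ≤ B almost surely and Var(ε_t | F_{t-1}) ≤ σ_t² for all 1 ≤ t ≤ n, with σ_t F_{t-1}-measurable and B > 0, and suppose Σ_{i=1}^n σ_i² ‖G_i‖² ≤ C_n² almost surely, where C_n > 0 is deterministic. Let h(u) = (1 + u) log(1 + u) − u. Then for every r ≥ 0, P( sup_{1 ≤ t ≤ n} ‖(ρI + V_t)^{-1/2} M_t‖ ≥ r ) ≤ 2 exp( − (C_n²/B²) h( B r / C_n² ) ). -/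
open MeasureTheory Filter Real
open scoped RealInnerProductSpace

noncomputable def outerProd {H : Type*} [NormedAddCommGroup H] [InnerProductSpace ℝ H]
    (x : H) : H →L[ℝ] H :=
  (innerSL ℝ x).smulRight x

/-!
Write `Y t` for the whitened sum at time `t`. By the Sherman–Morrison formula, adding a rank-one
operator to the regularised covariance only shortens whitened vectors, and the newly whitened `X t`
has norm at most `1`. So `Y` moves by a contraction followed by a bounded martingale increment.

Since `z ↦ cosh √z` is convex, `cosh (l * ‖·‖)` grows under such a step as it would on the real
line (Pinelis): its conditional expectation is multiplied by at most
`exp ((exp (l * B) - 1 - l * B) / B ^ 2 * Var * ‖G t‖ ^ 2)`. Discounted by these factors it is a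
nonnegative supermartingale; Ville's maximal inequality and the best choice of `l` finish the proof.
-/

open ProbabilityTheory InnerProductGeometry

theorem hasSum_cosh_sqrt {z : ℝ} (hz : 0 ≤ z) :
    HasSum (fun k : ℕ => z ^ k / (2 * k).factorial) (cosh √z) := by
  simpa only [pow_mul, sq_sqrt hz] using hasSum_cosh √z

theorem convexOn_cosh_sqrt : ConvexOn ℝ (Set.Ici 0) fun z : ℝ => cosh √z := by
  refine ⟨convex_Ici 0, fun v hv w hw a b ha hb hab => ?_⟩
  have hvw : 0 ≤ a • v + b • w := convex_Ici 0 hv hw ha hb hab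
  refine hasSum_le (fun k => ?_) (hasSum_cosh_sqrt hvw)
    (((hasSum_cosh_sqrt hv).mul_left a).add ((hasSum_cosh_sqrt hw).mul_left b))
  have hpow : (a • v + b • w) ^ k ≤ a * v ^ k + b * w ^ k :=
    (convexOn_pow k).2 hv hw ha hb hab
  rw [← mul_div_assoc, ← mul_div_assoc, ← add_div]
  gcongr

theorem hasSum_exp_sub_one_sub (z : ℝ) :
    HasSum (fun k : ℕ => z ^ (k + 2) / (k + 2).factorial) (exp z - 1 - z) := by
  have h := (hasSum_nat_add_iff' 2).2 (NormedSpace.expSeries_div_hasSum_exp z)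
  rw [← exp_eq_exp_ℝ] at h
  simpa [Finset.sum_range_succ, sub_sub] using h

theorem exp_mul_sub_one_sub_le {s y : ℝ} (hs0 : 0 ≤ s) (hs1 : s ≤ 1) (hy : 0 ≤ y) :
    exp (s * y) - 1 - s * y ≤ s ^ 2 * (exp y - 1 - y) := by
  refine hasSum_le (fun k => ?_) (hasSum_exp_sub_one_sub _)
    ((hasSum_exp_sub_one_sub y).mul_left (s ^ 2))
  rw [← mul_div_assoc, mul_pow]
  gcongr ?_ * _ / _
  exact pow_le_pow_of_le_one hs0 hs1 (by omega)

/-- The coefficient `(e^{lB} - 1 - lB) / B²` by which a centred variable bounded by `B` has its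
conditional variance multiplied in Bennett's bound on its cumulant generating function at `l`. -/
noncomputable def bennettCoeff (B l : ℝ) : ℝ := (exp (l * B) - 1 - l * B) / B ^ 2

theorem bennettCoeff_nonneg (B l : ℝ) : 0 ≤ bennettCoeff B l :=
  div_nonneg (by linarith [add_one_le_exp (l * B)]) (sq_nonneg B)

/-- Bennett's rate function `h`, the exponent in the tail bound. -/
noncomputable def bennettFun (u : ℝ) : ℝ := (1 + u) * log (1 + u) - u

-- The value `log (1 + B r / v) / B` of `l` minimises `bennettCoeff B l * v - l * r`.
theorem bennettCoeff_mul_sub_eq {B v r : ℝ} (hB : 0 < B) (hv : 0 < v) (hu : 0 < 1 + B * r / v) :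
    bennettCoeff B (log (1 + B * r / v) / B) * v - log (1 + B * r / v) / B * r =
      -(v / B ^ 2) * bennettFun (B * r / v) := by
  rw [bennettCoeff, bennettFun, div_mul_cancel₀ _ hB.ne', exp_log hu]
  field

theorem exp_mul_sub_one_sub_le_bennettCoeff {B l a : ℝ} (hB : 0 < B) (hl : 0 ≤ l)
    (ha : 0 ≤ a) (haB : a ≤ B) :
    exp (l * a) - 1 - l * a ≤ bennettCoeff B l * a ^ 2 := by
  have h := exp_mul_sub_one_sub_le (div_nonneg ha hB.le) ((div_le_one hB).2 haB)
    (mul_nonneg hl hB.le)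
  have hscale : a / B * (l * B) = l * a := by field
  rw [hscale] at h
  exact h.trans_eq (by rw [bennettCoeff]; ring)

section InnerProductSpace

variable {H : Type*} [NormedAddCommGroup H] [InnerProductSpace ℝ H]

-- `z ↦ cosh √z` is convex, and `‖x + d‖²` is the convex combination of `(‖x‖ - ‖d‖)²` and
-- `(‖x‖ + ‖d‖)²` whose weights are given by the angle.
theorem cosh_norm_add_le_cosh_mul_cosh_add (x d : H) :
    cosh ‖x + d‖ ≤ cosh ‖x‖ * cosh ‖d‖ + cos (angle x d) * (sinh ‖x‖ * sinh ‖d‖) := by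
  set τ := cos (angle x d) with hτ
  have hnorm : ‖x + d‖ ^ 2 =
      (1 - τ) / 2 * (‖x‖ - ‖d‖) ^ 2 + (1 + τ) / 2 * (‖x‖ + ‖d‖) ^ 2 := by
    rw [norm_add_sq_real, ← cos_angle_mul_norm_mul_norm, ← hτ]
    ring
  have hweight_sub : 0 ≤ (1 - τ) / 2 := by linarith [cos_le_one (angle x d)]
  have hweight_add : 0 ≤ (1 + τ) / 2 := by linarith [neg_one_le_cos (angle x d)]
  have hconv := convexOn_cosh_sqrt.2 (Set.mem_Ici.2 (sq_nonneg (‖x‖ - ‖d‖)))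
    (Set.mem_Ici.2 (sq_nonneg (‖x‖ + ‖d‖))) hweight_sub hweight_add (by ring)
  simp only [smul_eq_mul, ← hnorm, sqrt_sq_eq_abs, cosh_abs, cosh_add, cosh_sub] at hconv
  linarith

theorem sinh_norm_mul_inner_div_norm (x d : H) :
    sinh ‖x‖ * (⟪x, d⟫ / ‖x‖) = cos (angle x d) * (sinh ‖x‖ * ‖d‖) := by
  rcases eq_or_ne x 0 with rfl | hx
  · simp
  · rw [← cos_angle_mul_norm_mul_norm]
    field [norm_ne_zero_iff.2 hx]

theorem cosh_norm_add_le (x d : H) :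
    cosh ‖x + d‖ ≤ cosh ‖x‖ + sinh ‖x‖ * (⟪x, d⟫ / ‖x‖) +
      cosh ‖x‖ * (exp ‖d‖ - 1 - ‖d‖) := by
  have hsinh_d : ‖d‖ ≤ sinh ‖d‖ := self_le_sinh_iff.2 (norm_nonneg d)
  have hsinh_x : cos (angle x d) * sinh ‖x‖ ≤ cosh ‖x‖ :=
    calc cos (angle x d) * sinh ‖x‖ ≤ 1 * sinh ‖x‖ := by
          gcongr
          exact cos_le_one _
      _ ≤ cosh ‖x‖ := by simpa using (sinh_lt_cosh ‖x‖).le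
  have hrem := mul_le_mul_of_nonneg_right hsinh_x (sub_nonneg.2 hsinh_d)
  rw [sinh_norm_mul_inner_div_norm, ← cosh_add_sinh ‖d‖]
  linarith [cosh_norm_add_le_cosh_mul_cosh_add x d]

/-- The derivative of `cosh (l * ‖·‖)` at `x` in the direction `g`; at `x = 0` it is `0`, by
`0 / 0 = 0`. -/
noncomputable def coshSlope (l : ℝ) (x g : H) : ℝ := l * sinh (l * ‖x‖) * (⟪x, g⟫ / ‖x‖)

theorem abs_coshSlope_le {l : ℝ} {g : H} (hl : 0 ≤ l) (x : H) (hg : ‖g‖ ≤ 1) :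
    |coshSlope l x g| ≤ l * cosh (l * ‖x‖) := by
  have hinner : |⟪x, g⟫ / ‖x‖| ≤ 1 := by
    rw [abs_div, abs_norm]
    refine div_le_one_of_le₀ ((abs_real_inner_le_norm x g).trans ?_) (norm_nonneg x)
    exact mul_le_of_le_one_right (norm_nonneg x) hg
  have hsinh : |sinh (l * ‖x‖)| ≤ cosh (l * ‖x‖) := by
    rw [abs_of_nonneg (sinh_nonneg_iff.2 (by positivity))]
    exact (sinh_lt_cosh _).le
  calc |coshSlope l x g| = l * |sinh (l * ‖x‖)| * |⟪x, g⟫ / ‖x‖| := by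
        rw [coshSlope, abs_mul, abs_mul, abs_of_nonneg hl]
    _ ≤ l * cosh (l * ‖x‖) * 1 := by gcongr
    _ = l * cosh (l * ‖x‖) := mul_one _

theorem cosh_mul_norm_add_smul_le {B l e : ℝ} {g : H} (x : H) (hB : 0 < B) (hl : 0 ≤ l)
    (he : |e| ≤ B) (hg : ‖g‖ ≤ 1) :
    cosh (l * ‖x + e • g‖) ≤ cosh (l * ‖x‖) + coshSlope l x g * e +
      bennettCoeff B l * cosh (l * ‖x‖) * ‖g‖ ^ 2 * e ^ 2 := by
  have hlnorm (y : H) : ‖l • y‖ = l * ‖y‖ := by rw [norm_smul, norm_of_nonneg hl]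
  have hmain := cosh_norm_add_le (l • x) (l • e • g)
  have hlin : sinh (l * ‖x‖) * (⟪l • x, l • e • g⟫ / (l * ‖x‖)) =
      coshSlope l x g * e := by
    rw [coshSlope]
    rcases eq_or_ne l 0 with rfl | hl'
    · simp
    · simp only [real_inner_smul_left, real_inner_smul_right]
      field
  have hrem : exp (l * ‖e • g‖) - 1 - l * ‖e • g‖ ≤ bennettCoeff B l * (‖g‖ ^ 2 * e ^ 2) := by
    have heg : ‖e • g‖ ≤ B := by
      rw [norm_smul, norm_eq_abs]
      exact (mul_le_of_le_one_right (abs_nonneg e) hg).trans he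
    refine (exp_mul_sub_one_sub_le_bennettCoeff hB hl (norm_nonneg _) heg).trans_eq ?_
    rw [norm_smul, norm_eq_abs, mul_pow, sq_abs, mul_comm (e ^ 2)]
  rw [← smul_add, hlnorm, hlnorm, hlnorm, hlin] at hmain
  linarith [mul_le_mul_of_nonneg_left hrem (cosh_pos (l * ‖x‖)).le]

end InnerProductSpace

section Probability

variable {Ω : Type*} {m0 : MeasurableSpace Ω} {μ : Measure Ω}

theorem supermartingale_maximal_ineq_horizon [IsFiniteMeasure μ] {ℱ : Filtration ℕ m0}
    {f : ℕ → Ω → ℝ} (hf : Supermartingale f ℱ μ) (hf0 : 0 ≤ f) (θ : ℝ) (n : ℕ) :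
    θ * μ.real {ω | ∃ t ≤ n, θ ≤ f t ω} ≤ ∫ ω, f 0 ω ∂μ := by
  let τ : Ω → ℕ∞ := fun ω => (hittingBtwn f (Set.Ici θ) 0 n ω : ℕ)
  have hτ : IsStoppingTime ℱ τ :=
    hf.stronglyAdapted.adapted.isStoppingTime_hittingBtwn measurableSet_Ici
  have hτn (ω : Ω) : τ ω ≤ n := Nat.cast_le.2 (hittingBtwn_le ω)
  have hint : Integrable (stoppedValue f τ) μ := integrable_stoppedValue ℕ hτ hf.integrable hτn
  have hstopped : ∫ ω, stoppedValue f τ ω ∂μ ≤ ∫ ω, f 0 ω ∂μ := by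
    have h := hf.neg.expected_stoppedValue_mono (isStoppingTime_const ℱ 0) hτ
      (fun _ => zero_le) hτn
    rw [stoppedValue_const] at h
    simpa only [stoppedValue, Pi.neg_apply, integral_neg, neg_le_neg_iff] using h
  have hhit : {ω | ∃ t ≤ n, θ ≤ f t ω} = {ω | θ ≤ stoppedValue f τ ω} := by
    ext ω
    exact ⟨fun ⟨t, htn, ht⟩ => stoppedValue_hittingBtwn_mem ⟨t, ⟨zero_le, htn⟩, ht⟩,
      fun h => ⟨_, hittingBtwn_le ω, h⟩⟩
  rw [hhit]
  exact (mul_meas_ge_le_integral_of_nonneg (ae_of_all _ fun ω => hf0 _ ω) hint θ).trans hstopped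

theorem supermartingale_maximal_ineq [IsFiniteMeasure μ] {ℱ : Filtration ℕ m0}
    {f : ℕ → Ω → ℝ} (hf : Supermartingale f ℱ μ) (hf0 : 0 ≤ f) (θ : ℝ) :
    θ * μ.real {ω | ∃ t, θ ≤ f t ω} ≤ ∫ ω, f 0 ω ∂μ := by
  have hUnion : {ω | ∃ t, θ ≤ f t ω} = ⋃ n, {ω | ∃ t ≤ n, θ ≤ f t ω} := by
    ext ω
    simp only [Set.mem_iUnion, Set.mem_ofPred_eq]
    exact ⟨fun ⟨t, ht⟩ => ⟨t, t, le_rfl, ht⟩, fun ⟨_, t, _, ht⟩ => ⟨t, ht⟩⟩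
  have hmono : Monotone fun n => {ω | ∃ t ≤ n, θ ≤ f t ω} :=
    fun _ _ hmn _ ⟨t, ht, hθ⟩ => ⟨t, ht.trans hmn, hθ⟩
  have hlim := (ENNReal.tendsto_toReal (measure_ne_top μ _)).comp
    (tendsto_measure_iUnion_atTop (μ := μ) hmono)
  rw [hUnion]
  exact le_of_tendsto' (hlim.const_mul θ) (supermartingale_maximal_ineq_horizon hf hf0 θ)

theorem condExp_add_mul_add_mul_sq [IsFiniteMeasure μ] {m : MeasurableSpace Ω} (hm : m ≤ m0)
    {P K R e : Ω → ℝ} (he : MemLp e 2 μ) (he0 : μ[e | m] =ᵐ[μ] 0)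
    (hP : StronglyMeasurable[m] P) (hK : StronglyMeasurable[m] K) (hR : StronglyMeasurable[m] R)
    (hPint : Integrable P μ) (hKint : Integrable (K * e) μ) (hRint : Integrable (R * e ^ 2) μ) :
    μ[P + K * e + R * e ^ 2 | m] =ᵐ[μ] P + R * Var[e; μ | m] := by
  filter_upwards [condExp_add (hPint.add hKint) hRint m, condExp_add hPint hKint m,
    condExp_mul_of_stronglyMeasurable_left hK hKint (he.integrable one_le_two),
    condExp_mul_of_stronglyMeasurable_left hR hRint he.integrable_sq,
    condVar_ae_eq_condExp_sq_sub_sq_condExp hm he, he0] with ω hadd hadd' hlin hsq hvar hzero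
  simp only [Pi.add_apply, Pi.mul_apply, Pi.sub_apply, Pi.pow_apply, Pi.zero_apply]
    at hadd hadd' hlin hsq hvar hzero ⊢
  rw [hadd, hadd', hlin, hsq, hvar, hzero, condExp_of_stronglyMeasurable hm hP hPint]
  ring

end Probability

section Recursion

variable {H : Type*} [NormedAddCommGroup H]
  {Ω : Type*} {m0 : MeasurableSpace Ω} {μ : Measure Ω} {ℱ : Filtration ℕ m0}

/-- Martingale differences `ξ` bounded by `B`. The index is that of the past: `ξ t` is the
increment from time `t` to time `t + 1`. -/
structure IsBoundedMartingaleDiff (ℱ : Filtration ℕ m0) (μ : Measure Ω) (ξ : ℕ → Ω → ℝ)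
    (B : ℝ) : Prop where
  stronglyMeasurable : ∀ t, StronglyMeasurable[ℱ (t + 1)] (ξ t)
  condExp_eq_zero : ∀ t, μ[ξ t | ℱ t] =ᵐ[μ] 0
  abs_le : ∀ t, ∀ᵐ ω ∂μ, |ξ t ω| ≤ B

theorem IsBoundedMartingaleDiff.memLp [IsFiniteMeasure μ] {ξ : ℕ → Ω → ℝ} {B : ℝ}
    (hξ : IsBoundedMartingaleDiff ℱ μ ξ B) (t : ℕ) (p : ENNReal) : MemLp (ξ t) p μ :=
  .of_bound ((hξ.stronglyMeasurable t).mono (ℱ.le _)).aestronglyMeasurable B (hξ.abs_le t)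

theorem isBoundedMartingaleDiff_ite {e : ℕ → Ω → ℝ} {B : ℝ} {n : ℕ} (hB : 0 ≤ B)
    (hmeas : ∀ t < n, StronglyMeasurable[ℱ (t + 1)] (e t))
    (hzero : ∀ t < n, μ[e t | ℱ t] =ᵐ[μ] 0) (hle : ∀ t < n, ∀ᵐ ω ∂μ, |e t ω| ≤ B) :
    IsBoundedMartingaleDiff ℱ μ (fun t => if t < n then e t else 0) B where
  stronglyMeasurable t := by
    split_ifs with htn
    exacts [hmeas t htn, stronglyMeasurable_zero]
  condExp_eq_zero t := by
    split_ifs with htn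
    exacts [hzero t htn, by rw [condExp_zero]]
  abs_le t := by
    split_ifs with htn
    exacts [hle t htn, ae_of_all _ fun _ => by simpa using hB]

/-- The predictable quadratic variation `∑ i < t, Var(ξ i | ℱ i) ‖g i‖²` of the sums of `ξ i • g i`.
-/
noncomputable def predictableVariation (ℱ : Filtration ℕ m0) (μ : Measure Ω) (ξ : ℕ → Ω → ℝ)
    (g : ℕ → Ω → H) (t : ℕ) (ω : Ω) : ℝ :=
  ∑ i ∈ Finset.range t, (Var[ξ i; μ | ℱ i]) ω * ‖g i ω‖ ^ 2

theorem ae_predictableVariation_nonneg (ξ : ℕ → Ω → ℝ) (g : ℕ → Ω → H) (t : ℕ) :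
    ∀ᵐ ω ∂μ, 0 ≤ predictableVariation ℱ μ ξ g t ω := by
  have hvar (i : ℕ) : 0 ≤ᵐ[μ] Var[ξ i; μ | ℱ i] :=
    condExp_nonneg (ae_of_all _ fun ω => sq_nonneg _)
  filter_upwards [ae_all_iff.2 hvar] with ω hω
  exact Finset.sum_nonneg fun i _ => mul_nonneg (hω i) (sq_nonneg _)

theorem ae_predictableVariation_ite_le {e : ℕ → Ω → ℝ} {σ : ℕ → Ω → ℝ} {n : ℕ}
    (hvar : ∀ t < n, Var[e t; μ | ℱ t] ≤ᵐ[μ] fun ω => σ t ω ^ 2) (g : ℕ → Ω → H) :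
    ∀ᵐ ω ∂μ, ∀ t, predictableVariation ℱ μ (fun i => if i < n then e i else 0) g t ω ≤
      ∑ i ∈ Finset.range n, σ i ω ^ 2 * ‖g i ω‖ ^ 2 := by
  have hterm (i : ℕ) : ∀ᵐ ω ∂μ, (Var[if i < n then e i else 0; μ | ℱ i]) ω * ‖g i ω‖ ^ 2 ≤
      if i < n then σ i ω ^ 2 * ‖g i ω‖ ^ 2 else 0 := by
    split_ifs with hin
    · filter_upwards [hvar i hin] with ω hω
      exact mul_le_mul_of_nonneg_right hω (sq_nonneg _)
    · simp [condVar_zero]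
  filter_upwards [ae_all_iff.2 hterm] with ω hω t
  refine (Finset.sum_le_sum fun i _ => hω i).trans ?_
  rw [← Finset.sum_filter]
  refine Finset.sum_le_sum_of_subset_of_nonneg (fun i hi => ?_) fun i _ _ => by positivity
  exact Finset.mem_range.2 (Finset.mem_filter.1 hi).2

/-- The factor by which `lyapunov` is discounted to offset the growth of `cosh (l * ‖Y t‖)`. -/
noncomputable def varDiscount (ℱ : Filtration ℕ m0) (μ : Measure Ω) (ξ : ℕ → Ω → ℝ)
    (g : ℕ → Ω → H) (b : ℝ) (t : ℕ) (ω : Ω) : ℝ :=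
  exp (-(b * predictableVariation ℱ μ ξ g t ω))

/-- The Lyapunov process of a contractive recursion `Y` with noise `ξ` and gain `g`. -/
noncomputable def lyapunov (ℱ : Filtration ℕ m0) (μ : Measure Ω) (Y : ℕ → Ω → H)
    (ξ : ℕ → Ω → ℝ) (g : ℕ → Ω → H) (B l : ℝ) (t : ℕ) (ω : Ω) : ℝ :=
  cosh (l * ‖Y t ω‖) * varDiscount ℱ μ ξ g (bennettCoeff B l) t ω

variable [InnerProductSpace ℝ H]

/-- A vector-valued process `Y` started at `0` whose step from `t` to `t + 1` moves `Y t` to the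
drift `P t`, a predictable vector no longer than `Y t`, and then adds the noise `ξ t` along the gain
`g t`, a predictable vector in the unit ball. Only the norms of `P t` and `g t` and their inner
product have to be measurable. -/
structure IsContractiveRecursion (ℱ : Filtration ℕ m0) (Y P g : ℕ → Ω → H)
    (ξ : ℕ → Ω → ℝ) : Prop where
  zero : ∀ ω, Y 0 ω = 0
  succ : ∀ t ω, Y (t + 1) ω = P t ω + ξ t ω • g t ω
  norm_drift_le : ∀ t ω, ‖P t ω‖ ≤ ‖Y t ω‖
  norm_gain_le_one : ∀ t ω, ‖g t ω‖ ≤ 1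
  stronglyMeasurable_norm_drift : ∀ t, StronglyMeasurable[ℱ t] fun ω => ‖P t ω‖
  stronglyMeasurable_norm_gain : ∀ t, StronglyMeasurable[ℱ t] fun ω => ‖g t ω‖
  stronglyMeasurable_inner_drift_gain : ∀ t, StronglyMeasurable[ℱ t] fun ω => ⟪P t ω, g t ω⟫

namespace IsContractiveRecursion

variable {Y P g : ℕ → Ω → H} {ξ : ℕ → Ω → ℝ} {B l : ℝ}

theorem stronglyMeasurable_norm (hY : IsContractiveRecursion ℱ Y P g ξ)
    (hξ : IsBoundedMartingaleDiff ℱ μ ξ B) : ∀ t, StronglyMeasurable[ℱ t] fun ω => ‖Y t ω‖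
  | 0 => by simpa only [hY.zero] using stronglyMeasurable_const
  | t + 1 => by
    have hmono := ℱ.mono t.le_succ
    have hnorm (ω : Ω) : ‖Y (t + 1) ω‖ =
        √(‖P t ω‖ ^ 2 + 2 * (ξ t ω * ⟪P t ω, g t ω⟫) + ξ t ω ^ 2 * ‖g t ω‖ ^ 2) := by
      rw [hY.succ, ← sqrt_sq (norm_nonneg _), norm_add_sq_real, real_inner_smul_right, norm_smul,
        mul_pow, norm_eq_abs, sq_abs]
    simp only [hnorm]
    have hP := (hY.stronglyMeasurable_norm_drift t).mono hmono
    have hg := (hY.stronglyMeasurable_norm_gain t).mono hmono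
    have hPg := (hY.stronglyMeasurable_inner_drift_gain t).mono hmono
    have hξt := hξ.stronglyMeasurable t
    exact continuous_sqrt.comp_stronglyMeasurable
      (((hP.pow 2).add ((hξt.mul hPg).const_mul 2)).add ((hξt.pow 2).mul (hg.pow 2)))

theorem ae_norm_le (hY : IsContractiveRecursion ℱ Y P g ξ)
    (hξ : IsBoundedMartingaleDiff ℱ μ ξ B) (t : ℕ) : ∀ᵐ ω ∂μ, ‖Y t ω‖ ≤ t * B := by
  induction t with
  | zero => simp [hY.zero]
  | succ t ih =>
    filter_upwards [ih, hξ.abs_le t] with ω hω hξω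
    calc ‖Y (t + 1) ω‖ ≤ ‖P t ω‖ + |ξ t ω| * ‖g t ω‖ := by
          simpa only [hY.succ, norm_smul, norm_eq_abs] using norm_add_le (P t ω) (ξ t ω • g t ω)
      _ ≤ t * B + B := add_le_add ((hY.norm_drift_le t ω).trans hω)
          ((mul_le_of_le_one_right (abs_nonneg _) (hY.norm_gain_le_one t ω)).trans hξω)
      _ = (t + 1 : ℕ) * B := by push_cast; ring

theorem ae_cosh_le (hY : IsContractiveRecursion ℱ Y P g ξ)
    (hξ : IsBoundedMartingaleDiff ℱ μ ξ B) (l : ℝ) (t : ℕ) :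
    ∀ᵐ ω ∂μ, cosh (l * ‖Y t ω‖) ≤ cosh (l * (t * B)) := by
  filter_upwards [hY.ae_norm_le hξ t] with ω hω
  rw [cosh_le_cosh, abs_mul, abs_mul, abs_norm]
  gcongr
  exact hω.trans (le_abs_self _)

theorem integrable_cosh [IsFiniteMeasure μ] (hY : IsContractiveRecursion ℱ Y P g ξ)
    (hξ : IsBoundedMartingaleDiff ℱ μ ξ B) (l : ℝ) (t : ℕ) :
    Integrable (fun ω => cosh (l * ‖Y t ω‖)) μ := by
  refine .of_bound (continuous_cosh.comp_stronglyMeasurable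
    (((hY.stronglyMeasurable_norm hξ t).mono (ℱ.le t)).const_mul l)).aestronglyMeasurable
    (cosh (l * (t * B))) ?_
  filter_upwards [hY.ae_cosh_le hξ l t] with ω hω
  rwa [norm_of_nonneg (cosh_pos _).le]

theorem cosh_drift_le (hY : IsContractiveRecursion ℱ Y P g ξ) (l : ℝ) (t : ℕ) (ω : Ω) :
    cosh (l * ‖P t ω‖) ≤ cosh (l * ‖Y t ω‖) := by
  rw [cosh_le_cosh, abs_mul, abs_mul, abs_norm, abs_norm]
  gcongr
  exact hY.norm_drift_le t ω

theorem stronglyMeasurable_cosh_drift (hY : IsContractiveRecursion ℱ Y P g ξ) (l : ℝ) (t : ℕ) :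
    StronglyMeasurable[ℱ t] fun ω => cosh (l * ‖P t ω‖) :=
  continuous_cosh.comp_stronglyMeasurable ((hY.stronglyMeasurable_norm_drift t).const_mul l)

theorem integrable_cosh_drift [IsFiniteMeasure μ] (hY : IsContractiveRecursion ℱ Y P g ξ)
    (hξ : IsBoundedMartingaleDiff ℱ μ ξ B) (l : ℝ) (t : ℕ) :
    Integrable (fun ω => cosh (l * ‖P t ω‖)) μ := by
  refine (hY.integrable_cosh hξ l t).mono'
    ((hY.stronglyMeasurable_cosh_drift l t).mono (ℱ.le t)).aestronglyMeasurable
    (ae_of_all _ fun ω => ?_)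
  rw [norm_of_nonneg (cosh_pos _).le]
  exact hY.cosh_drift_le l t ω

theorem stronglyMeasurable_coshSlope (hY : IsContractiveRecursion ℱ Y P g ξ) (l : ℝ) (t : ℕ) :
    StronglyMeasurable[ℱ t] fun ω => coshSlope l (P t ω) (g t ω) :=
  ((continuous_sinh.comp_stronglyMeasurable
    ((hY.stronglyMeasurable_norm_drift t).const_mul l)).const_mul l).mul
    ((hY.stronglyMeasurable_inner_drift_gain t).div (hY.stronglyMeasurable_norm_drift t))

theorem integrable_coshSlope [IsFiniteMeasure μ] (hY : IsContractiveRecursion ℱ Y P g ξ)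
    (hξ : IsBoundedMartingaleDiff ℱ μ ξ B) (hl : 0 ≤ l) (t : ℕ) :
    Integrable (fun ω => coshSlope l (P t ω) (g t ω)) μ :=
  ((hY.integrable_cosh_drift hξ l t).const_mul l).mono'
    ((hY.stronglyMeasurable_coshSlope l t).mono (ℱ.le t)).aestronglyMeasurable
    (ae_of_all _ fun ω => abs_coshSlope_le hl (P t ω) (hY.norm_gain_le_one t ω))

theorem condExp_cosh_le [IsFiniteMeasure μ] (hY : IsContractiveRecursion ℱ Y P g ξ)
    (hξ : IsBoundedMartingaleDiff ℱ μ ξ B) (hB : 0 < B) (hl : 0 ≤ l) (t : ℕ) :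
    μ[fun ω => cosh (l * ‖Y (t + 1) ω‖) | ℱ t] ≤ᵐ[μ] fun ω => cosh (l * ‖Y t ω‖) *
      exp (bennettCoeff B l * ((Var[ξ t; μ | ℱ t]) ω * ‖g t ω‖ ^ 2)) := by
  let F : Ω → ℝ := fun ω => cosh (l * ‖P t ω‖)
  let K : Ω → ℝ := fun ω => coshSlope l (P t ω) (g t ω)
  let R : Ω → ℝ := fun ω => bennettCoeff B l * cosh (l * ‖P t ω‖) * ‖g t ω‖ ^ 2
  have hF : StronglyMeasurable[ℱ t] F := hY.stronglyMeasurable_cosh_drift l t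
  have hR : StronglyMeasurable[ℱ t] R :=
    (hF.const_mul _).mul ((hY.stronglyMeasurable_norm_gain t).pow 2)
  have hFint : Integrable F μ := hY.integrable_cosh_drift hξ l t
  have hRint : Integrable R μ := (hFint.const_mul _).mul_bdd (c := 1)
    (((hY.stronglyMeasurable_norm_gain t).pow 2).mono (ℱ.le t)).aestronglyMeasurable
    (ae_of_all _ fun ω => by simpa using hY.norm_gain_le_one t ω)
  have hKξ : Integrable (K * ξ t) μ :=
    (hY.integrable_coshSlope hξ hl t).mul_of_top_left (hξ.memLp t ⊤)
  have hRξ : Integrable (R * ξ t ^ 2) μ := by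
    simpa only [pow_two, mul_assoc] using
      (hRint.mul_of_top_left (hξ.memLp t ⊤)).mul_of_top_left (hξ.memLp t ⊤)
  have hstep : (fun ω => cosh (l * ‖Y (t + 1) ω‖)) ≤ᵐ[μ] F + K * ξ t + R * ξ t ^ 2 := by
    filter_upwards [hξ.abs_le t] with ω hω
    rw [hY.succ]
    exact cosh_mul_norm_add_smul_le _ hB hl hω (hY.norm_gain_le_one t ω)
  have hmono := condExp_mono (m := ℱ t) (hY.integrable_cosh hξ l (t + 1))
    ((hFint.add hKξ).add hRξ) hstep
  filter_upwards [hmono, condExp_add_mul_add_mul_sq (ℱ.le t) (hξ.memLp t 2)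
    (hξ.condExp_eq_zero t) hF (hY.stronglyMeasurable_coshSlope l t) hR hFint hKξ hRξ]
    with ω hle heq
  calc (μ[fun ω => cosh (l * ‖Y (t + 1) ω‖) | ℱ t]) ω
      ≤ F ω + R ω * (Var[ξ t; μ | ℱ t]) ω := hle.trans_eq heq
    _ = F ω * (bennettCoeff B l * ((Var[ξ t; μ | ℱ t]) ω * ‖g t ω‖ ^ 2) + 1) := by
        simp only [F, R]; ring
    _ ≤ F ω * exp (bennettCoeff B l * ((Var[ξ t; μ | ℱ t]) ω * ‖g t ω‖ ^ 2)) :=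
        mul_le_mul_of_nonneg_left (add_one_le_exp _) (cosh_pos _).le
    _ ≤ _ := mul_le_mul_of_nonneg_right (hY.cosh_drift_le l t ω) (exp_pos _).le

theorem stronglyMeasurable_varDiscount (hY : IsContractiveRecursion ℱ Y P g ξ) (b : ℝ) {s t : ℕ}
    (hst : s ≤ t + 1) : StronglyMeasurable[ℱ t] (varDiscount ℱ μ ξ g b s) := by
  have hterm (i : ℕ) (hi : i ∈ Finset.range s) :
      StronglyMeasurable[ℱ t] fun ω => (Var[ξ i; μ | ℱ i]) ω * ‖g i ω‖ ^ 2 :=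
    (stronglyMeasurable_condVar.mul ((hY.stronglyMeasurable_norm_gain i).pow 2)).mono
      (ℱ.mono (Nat.lt_succ_iff.1 ((Finset.mem_range.1 hi).trans_le hst)))
  exact continuous_exp.comp_stronglyMeasurable
    ((Finset.stronglyMeasurable_fun_sum _ hterm).const_mul b).neg

theorem integrable_cosh_mul_varDiscount [IsFiniteMeasure μ]
    (hY : IsContractiveRecursion ℱ Y P g ξ) (hξ : IsBoundedMartingaleDiff ℱ μ ξ B) (l : ℝ)
    {b : ℝ} (hb : 0 ≤ b) (s t : ℕ) :
    Integrable (fun ω => cosh (l * ‖Y s ω‖) * varDiscount ℱ μ ξ g b t ω) μ := by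
  refine (hY.integrable_cosh hξ l s).mul_bdd (c := 1)
    ((hY.stronglyMeasurable_varDiscount b t.le_succ).mono (ℱ.le t)).aestronglyMeasurable ?_
  filter_upwards [ae_predictableVariation_nonneg ξ g t] with ω hω
  rw [varDiscount, norm_of_nonneg (exp_pos _).le, exp_le_one_iff]
  exact neg_nonpos.2 (mul_nonneg hb hω)

theorem supermartingale_lyapunov [IsFiniteMeasure μ] (hY : IsContractiveRecursion ℱ Y P g ξ)
    (hξ : IsBoundedMartingaleDiff ℱ μ ξ B) (hB : 0 < B) (hl : 0 ≤ l) :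
    Supermartingale (lyapunov ℱ μ Y ξ g B l) ℱ μ := by
  have hb := bennettCoeff_nonneg B l
  refine supermartingale_nat (fun t => ?_) (fun t => ?_) (fun t => ?_)
  · exact (continuous_cosh.comp_stronglyMeasurable
      ((hY.stronglyMeasurable_norm hξ t).const_mul l)).mul
      (hY.stronglyMeasurable_varDiscount _ t.le_succ)
  · exact hY.integrable_cosh_mul_varDiscount hξ l hb t t
  · filter_upwards [hY.condExp_cosh_le hξ hB hl t, condExp_mul_of_stronglyMeasurable_right
      (hY.stronglyMeasurable_varDiscount (bennettCoeff B l) le_rfl)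
      (hY.integrable_cosh_mul_varDiscount hξ l hb (t + 1) (t + 1))
      (hY.integrable_cosh hξ l (t + 1))] with ω hle hpull
    refine (hpull.trans_le (mul_le_mul_of_nonneg_right hle (exp_pos _).le)).trans_eq ?_
    simp only [lyapunov, varDiscount, predictableVariation, Finset.sum_range_succ, mul_assoc,
      ← exp_add]
    ring_nf

theorem cosh_mul_exp_mul_measureReal_exists_le_norm_le_one [IsProbabilityMeasure μ]
    (hY : IsContractiveRecursion ℱ Y P g ξ) (hξ : IsBoundedMartingaleDiff ℱ μ ξ B) (hB : 0 < B)
    (hl : 0 ≤ l) {v r : ℝ} (hv : ∀ t, ∀ᵐ ω ∂μ, predictableVariation ℱ μ ξ g t ω ≤ v)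
    (hr : 0 ≤ r) :
    cosh (l * r) * exp (-(bennettCoeff B l * v)) * μ.real {ω | ∃ t, r ≤ ‖Y t ω‖} ≤ 1 := by
  set θ := cosh (l * r) * exp (-(bennettCoeff B l * v))
  have hsub : {ω | ∃ t, r ≤ ‖Y t ω‖} ≤ᵐ[μ] {ω | ∃ t, θ ≤ lyapunov ℱ μ Y ξ g B l t ω} := by
    filter_upwards [ae_all_iff.2 hv] with ω hω ⟨t, ht⟩
    have hcosh : cosh (l * r) ≤ cosh (l * ‖Y t ω‖) := by
      rw [cosh_le_cosh, abs_of_nonneg (by positivity), abs_of_nonneg (by positivity)]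
      gcongr
    have hexp : exp (-(bennettCoeff B l * v)) ≤ varDiscount ℱ μ ξ g (bennettCoeff B l) t ω :=
      exp_le_exp.2 (neg_le_neg (mul_le_mul_of_nonneg_left (hω t) (bennettCoeff_nonneg B l)))
    exact ⟨t, mul_le_mul hcosh hexp (exp_pos _).le (cosh_pos _).le⟩
  have hinit : ∫ ω, lyapunov ℱ μ Y ξ g B l 0 ω ∂μ = 1 := by
    simp [lyapunov, varDiscount, predictableVariation, hY.zero]
  calc θ * μ.real {ω | ∃ t, r ≤ ‖Y t ω‖}
      ≤ θ * μ.real {ω | ∃ t, θ ≤ lyapunov ℱ μ Y ξ g B l t ω} :=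
        mul_le_mul_of_nonneg_left (ENNReal.toReal_mono (measure_ne_top μ _)
          (measure_mono_ae hsub)) (mul_pos (cosh_pos _) (exp_pos _)).le
    _ ≤ ∫ ω, lyapunov ℱ μ Y ξ g B l 0 ω ∂μ :=
        supermartingale_maximal_ineq (hY.supermartingale_lyapunov hξ hB hl)
          (fun _ _ => mul_nonneg (cosh_pos _).le (exp_pos _).le) θ
    _ = 1 := hinit

theorem measureReal_exists_le_norm_le_exp [IsProbabilityMeasure μ]
    (hY : IsContractiveRecursion ℱ Y P g ξ) (hξ : IsBoundedMartingaleDiff ℱ μ ξ B) (hB : 0 < B)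
    (hl : 0 ≤ l) {v r : ℝ} (hv : ∀ t, ∀ᵐ ω ∂μ, predictableVariation ℱ μ ξ g t ω ≤ v)
    (hr : 0 ≤ r) :
    μ.real {ω | ∃ t, r ≤ ‖Y t ω‖} ≤ 2 * exp (bennettCoeff B l * v - l * r) := by
  set p := μ.real {ω | ∃ t, r ≤ ‖Y t ω‖}
  have hcosh : exp (l * r) / 2 ≤ cosh (l * r) := by
    rw [cosh_eq]
    linarith [exp_pos (-(l * r))]
  have hp : exp (l * r) / 2 * exp (-(bennettCoeff B l * v)) * p ≤ 1 :=
    le_trans (by gcongr)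
      (hY.cosh_mul_exp_mul_measureReal_exists_le_norm_le_one hξ hB hl hv hr)
  calc p = 2 * exp (bennettCoeff B l * v - l * r) *
        (exp (l * r) / 2 * exp (-(bennettCoeff B l * v)) * p) := by
        rw [exp_sub, exp_neg]
        field
    _ ≤ 2 * exp (bennettCoeff B l * v - l * r) := mul_le_of_le_one_right (by positivity) hp

theorem measureReal_exists_le_norm_le_bennett [IsProbabilityMeasure μ]
    (hY : IsContractiveRecursion ℱ Y P g ξ) (hξ : IsBoundedMartingaleDiff ℱ μ ξ B) (hB : 0 < B)
    {v r : ℝ} (hv0 : 0 < v) (hv : ∀ t, ∀ᵐ ω ∂μ, predictableVariation ℱ μ ξ g t ω ≤ v)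
    (hr : 0 ≤ r) :
    μ.real {ω | ∃ t, r ≤ ‖Y t ω‖} ≤ 2 * exp (-(v / B ^ 2) * bennettFun (B * r / v)) := by
  have hu : 1 ≤ 1 + B * r / v := le_add_of_nonneg_right (by positivity)
  rw [← bennettCoeff_mul_sub_eq hB hv0 (zero_lt_one.trans_le hu)]
  exact hY.measureReal_exists_le_norm_le_exp hξ hB (div_nonneg (log_nonneg hu) hB.le) hv hr

end IsContractiveRecursion

end Recursion

section InverseSquareRoot

variable {H : Type*} [NormedAddCommGroup H] [InnerProductSpace ℝ H]

@[simp]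
theorem outerProd_apply (x y : H) : outerProd x y = ⟪x, y⟫ • x := rfl

/-- `R` is an inverse square root of `A`, that is, `R` is symmetric and `R ∘ R` is a two-sided
inverse of `A`. Positivity of `R` is left out: it would only select one such `R`, and the inner
products `⟪R y, R z⟫` are the same for all of them. -/
structure IsInvSqrt (A R : H →L[ℝ] H) : Prop where
  isSymmetric : (R : H →ₗ[ℝ] H).IsSymmetric
  sq_apply_apply : ∀ z, R (R (A z)) = z
  apply_sq_apply : ∀ z, A (R (R z)) = z

theorem isInvSqrt_of_sq_eq {A Q R : H →L[ℝ] H} (hQ : (Q : H →ₗ[ℝ] H).IsSymmetric)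
    (hQA : Q ∘L Q = A) (hRQ : R ∘L Q = 1) (hQR : Q ∘L R = 1) : IsInvSqrt A R := by
  subst hQA
  replace hRQ (z : H) : R (Q z) = z := congr($hRQ z)
  replace hQR (z : H) : Q (R z) = z := congr($hQR z)
  refine ⟨fun x y => ?_, fun z => ?_, fun z => ?_⟩
  · calc ⟪R x, y⟫ = ⟪R x, Q (R y)⟫ := by rw [hQR]
      _ = ⟪Q (R x), R y⟫ := (hQ (R x) (R y)).symm
      _ = ⟪x, R y⟫ := by rw [hQR]
  · simp only [ContinuousLinearMap.comp_apply, hRQ]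
  · simp only [ContinuousLinearMap.comp_apply, hQR]

namespace IsInvSqrt

variable {A R R' : H →L[ℝ] H} {x : H}

theorem inner_apply_apply (h : IsInvSqrt A R) (y z : H) : ⟪R y, R z⟫ = ⟪y, R (R z)⟫ :=
  h.isSymmetric y (R z)

theorem sq_apply_eq (h : IsInvSqrt A R) {w z : H} (hwz : A w = z) : R (R z) = w := by
  rw [← hwz, h.sq_apply_apply]

theorem sherman_morrison (h : IsInvSqrt A R) (h' : IsInvSqrt (A + outerProd x) R')
    (z : H) : R' (R' z) = R (R z) - (⟪R x, R z⟫ / (1 + ‖R x‖ ^ 2)) • R (R x) := by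
  apply h'.sq_apply_eq
  set c := ⟪R x, R z⟫ / (1 + ‖R x‖ ^ 2) with hc
  have hinner : ⟪x, R (R z) - c • R (R x)⟫ = c := by
    rw [inner_sub_right, real_inner_smul_right, ← h.inner_apply_apply, ← h.inner_apply_apply,
      real_inner_self_eq_norm_sq, hc]
    field_simp
    ring
  rw [add_apply, outerProd_apply, hinner, map_sub, map_smul,
    h.apply_sq_apply, h.apply_sq_apply, sub_add_cancel]

theorem inner_apply_of_add_outerProd (h : IsInvSqrt A R) (h' : IsInvSqrt (A + outerProd x) R')
    (y z : H) :
    ⟪R' y, R' z⟫ = ⟪R y, R z⟫ - ⟪R x, R y⟫ * ⟪R x, R z⟫ / (1 + ‖R x‖ ^ 2) := by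
  rw [h'.inner_apply_apply, h.sherman_morrison h', inner_sub_right,
    real_inner_smul_right, ← h.inner_apply_apply, ← h.inner_apply_apply, real_inner_comm (R x)]
  ring

theorem norm_apply_le_of_add_outerProd (h : IsInvSqrt A R)
    (h' : IsInvSqrt (A + outerProd x) R') (z : H) : ‖R' z‖ ≤ ‖R z‖ := by
  refine le_of_sq_le_sq ?_ (norm_nonneg _)
  rw [← real_inner_self_eq_norm_sq, ← real_inner_self_eq_norm_sq,
    h.inner_apply_of_add_outerProd h']
  exact sub_le_self _ (div_nonneg (mul_self_nonneg _) (by positivity))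

theorem norm_apply_le_one_of_add_outerProd (h : IsInvSqrt A R)
    (h' : IsInvSqrt (A + outerProd x) R') : ‖R' x‖ ≤ 1 := by
  have hsq : ‖R' x‖ ^ 2 = ‖R x‖ ^ 2 / (1 + ‖R x‖ ^ 2) := by
    rw [← real_inner_self_eq_norm_sq, h.inner_apply_of_add_outerProd h',
      real_inner_self_eq_norm_sq]
    field
  rw [← sq_le_one_iff₀ (norm_nonneg _), hsq]
  exact div_le_one_of_le₀ (by linarith) (by positivity)

theorem of_sum_range_succ {Λ : H →L[ℝ] H} {x : ℕ → H} {t : ℕ}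
    (h : IsInvSqrt (Λ + ∑ i ∈ Finset.range (t + 1), outerProd (x i)) R) :
    IsInvSqrt (Λ + ∑ i ∈ Finset.range t, outerProd (x i) + outerProd (x t)) R := by
  rwa [add_assoc, ← Finset.sum_range_succ]

theorem stronglyMeasurable_inner {Ω : Type*} {m : MeasurableSpace Ω} {Λ : H →L[ℝ] H}
    {x : ℕ → Ω → H} {R : ℕ → Ω → H →L[ℝ] H}
    (hR : ∀ t ω, IsInvSqrt (Λ + ∑ i ∈ Finset.range t, outerProd (x i ω)) (R t ω)) {t : ℕ}
    (hx : ∀ i < t, StronglyMeasurable[m] (x i)) {u v : Ω → H}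
    (hu : StronglyMeasurable[m] u) (hv : StronglyMeasurable[m] v) :
    StronglyMeasurable[m] fun ω => ⟪R t ω (u ω), R t ω (v ω)⟫ := by
  induction t generalizing u v with
  | zero =>
    rcases isEmpty_or_nonempty Ω with _ | ⟨⟨ω₀⟩⟩
    · exact .of_subsingleton_dom
    have hconst (ω : Ω) : ⟪R 0 ω (u ω), R 0 ω (v ω)⟫ = ⟪u ω, (R 0 ω₀ ∘L R 0 ω₀) (v ω)⟫ := by
      rw [(hR 0 ω).inner_apply_apply, (hR 0 ω).sq_apply_eq ((hR 0 ω₀).apply_sq_apply (v ω))]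
      rfl
    simp only [hconst]
    exact hu.inner ((R 0 ω₀ ∘L R 0 ω₀).continuous.comp_stronglyMeasurable hv)
  | succ t ih =>
    have ih {u v : Ω → H} := @ih (fun i hi => hx i (hi.trans t.lt_succ_self)) u v
    have hxt := hx t t.lt_succ_self
    have hstep (ω : Ω) : ⟪R (t + 1) ω (u ω), R (t + 1) ω (v ω)⟫ = _ :=
      (hR t ω).inner_apply_of_add_outerProd (hR (t + 1) ω).of_sum_range_succ (u ω) (v ω)
    simp only [hstep, ← real_inner_self_eq_norm_sq]
    exact (ih hu hv).sub
      (((ih hxt hu).mul (ih hxt hv)).div (stronglyMeasurable_const.add (ih hxt hxt)))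

end IsInvSqrt

end InverseSquareRoot

section SelfNormalization

variable {H : Type*} [NormedAddCommGroup H] [InnerProductSpace ℝ H]
  {Ω : Type*} {m0 : MeasurableSpace Ω} {μ : Measure Ω} {ℱ : Filtration ℕ m0}

theorem isContractiveRecursion_isInvSqrt {Λ : H →L[ℝ] H} {x : ℕ → Ω → H} {ξ : ℕ → Ω → ℝ}
    {R : ℕ → Ω → H →L[ℝ] H} (hx : ∀ t, StronglyMeasurable[ℱ t] (x t))
    (hξ : ∀ t, StronglyMeasurable[ℱ (t + 1)] (ξ t))
    (hR : ∀ t ω, IsInvSqrt (Λ + ∑ i ∈ Finset.range t, outerProd (x i ω)) (R t ω)) :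
    IsContractiveRecursion ℱ
      (fun t ω => R t ω (∑ i ∈ Finset.range t, ξ i ω • x i ω))
      (fun t ω => R (t + 1) ω (∑ i ∈ Finset.range t, ξ i ω • x i ω))
      (fun t ω => R (t + 1) ω (x t ω)) ξ := by
  have hx_le {i t : ℕ} (hit : i ≤ t) : StronglyMeasurable[ℱ t] (x i) := (hx i).mono (ℱ.mono hit)
  have hsum (t : ℕ) : StronglyMeasurable[ℱ t] fun ω => ∑ i ∈ Finset.range t, ξ i ω • x i ω :=
    Finset.stronglyMeasurable_fun_sum _ fun i hi =>
      have hit : i + 1 ≤ t := Finset.mem_range.1 hi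
      ((hξ i).mono (ℱ.mono hit)).smul (hx_le (i.le_succ.trans hit))
  have hinner (t : ℕ) {u v : Ω → H} (hu : StronglyMeasurable[ℱ t] u)
      (hv : StronglyMeasurable[ℱ t] v) :
      StronglyMeasurable[ℱ t] fun ω => ⟪R (t + 1) ω (u ω), R (t + 1) ω (v ω)⟫ :=
    IsInvSqrt.stronglyMeasurable_inner hR (fun i hi => hx_le (Nat.lt_succ_iff.1 hi)) hu hv
  have hnorm (t : ℕ) {u : Ω → H} (hu : StronglyMeasurable[ℱ t] u) :
      StronglyMeasurable[ℱ t] fun ω => ‖R (t + 1) ω (u ω)‖ := by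
    simp only [norm_eq_sqrt_real_inner]
    exact continuous_sqrt.comp_stronglyMeasurable (hinner t hu hu)
  exact {
    zero := fun ω => by simp
    succ := fun t ω => by simp only [Finset.sum_range_succ, map_add, map_smul]
    norm_drift_le := fun t ω =>
      (hR t ω).norm_apply_le_of_add_outerProd (hR (t + 1) ω).of_sum_range_succ _
    norm_gain_le_one := fun t ω =>
      (hR t ω).norm_apply_le_one_of_add_outerProd (hR (t + 1) ω).of_sum_range_succ
    stronglyMeasurable_norm_drift := fun t => hnorm t (hsum t)
    stronglyMeasurable_norm_gain := fun t => hnorm t (hx t)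
    stronglyMeasurable_inner_drift_gain := fun t => hinner t (hsum t) (hx t) }

theorem sum_Icc_one_eq_sum_range {M : Type*} [AddCommMonoid M] (f : ℕ → M) (n : ℕ) :
    ∑ i ∈ Finset.Icc 1 n, f i = ∑ i ∈ Finset.range n, f (i + 1) := by
  rw [Finset.range_eq_Ico, Finset.sum_Ico_add', zero_add, Finset.Ico_add_one_right_eq_Icc]

end SelfNormalization

theorem stmt_6_general
    {H : Type*} [NormedAddCommGroup H] [InnerProductSpace ℝ H]
    {Ω : Type*} {m0 : MeasurableSpace Ω} {μ : Measure Ω} [IsProbabilityMeasure μ]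
    (ℱ : Filtration ℕ m0) (X : ℕ → Ω → H) (ε : ℕ → Ω → ℝ)
    (hX : ∀ t, 1 ≤ t → StronglyMeasurable[ℱ (t - 1)] (X t))
    (hεmeas : ∀ t, 1 ≤ t → StronglyMeasurable[ℱ t] (ε t))
    (hε0 : ∀ t, 1 ≤ t → μ[ε t | ℱ (t - 1)] =ᵐ[μ] 0)
    (Λ : H →L[ℝ] H) (R : ℕ → Ω → H →L[ℝ] H)
    (hR : ∀ t ω, IsInvSqrt (Λ + ∑ i ∈ Finset.Icc 1 t, outerProd (X i ω)) (R t ω))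
    (n : ℕ) (B : ℝ) (hB : 0 < B) (σ : ℕ → Ω → ℝ)
    (hbdd : ∀ t, 1 ≤ t → t ≤ n → ∀ᵐ ω ∂μ, |ε t ω| ≤ B)
    (hvar : ∀ t, 1 ≤ t → t ≤ n → Var[ε t; μ | ℱ (t - 1)] ≤ᵐ[μ] fun ω => σ t ω ^ 2)
    (C : ℝ) (hC : 0 < C)
    (hCn : ∀ᵐ ω ∂μ, ∑ i ∈ Finset.Icc 1 n, σ i ω ^ 2 * ‖R i ω (X i ω)‖ ^ 2 ≤ C ^ 2)
    (r : ℝ) (hr : 0 ≤ r) :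
    μ {ω | ∃ t, 1 ≤ t ∧ t ≤ n ∧ r ≤ ‖R t ω (∑ i ∈ Finset.Icc 1 t, ε i ω • X i ω)‖} ≤
      ENNReal.ofReal (2 * exp (-(C ^ 2 / B ^ 2) * bennettFun (B * r / C ^ 2))) := by
  simp only [sum_Icc_one_eq_sum_range] at hR hCn ⊢
  let ξ : ℕ → Ω → ℝ := fun t => if t < n then ε (t + 1) else 0
  have hξ : IsBoundedMartingaleDiff ℱ μ ξ B := isBoundedMartingaleDiff_ite hB.le
    (fun t _ => hεmeas (t + 1) t.succ_pos) (fun t _ => hε0 (t + 1) t.succ_pos)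
    (fun t ht => hbdd (t + 1) t.succ_pos ht)
  have hY := isContractiveRecursion_isInvSqrt (fun t => hX (t + 1) t.succ_pos)
    hξ.stronglyMeasurable hR
  have hvariation (t : ℕ) : ∀ᵐ ω ∂μ,
      predictableVariation ℱ μ ξ (fun t ω => R (t + 1) ω (X (t + 1) ω)) t ω ≤ C ^ 2 := by
    filter_upwards [hCn, ae_predictableVariation_ite_le (fun t ht => hvar (t + 1) t.succ_pos ht)
      fun t ω => R (t + 1) ω (X (t + 1) ω)] with ω hω hle
    exact (hle t).trans hω
  have hsub : {ω | ∃ t, 1 ≤ t ∧ t ≤ n ∧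
        r ≤ ‖R t ω (∑ i ∈ Finset.range t, ε (i + 1) ω • X (i + 1) ω)‖} ⊆
      {ω | ∃ t, r ≤ ‖R t ω (∑ i ∈ Finset.range t, ξ i ω • X (i + 1) ω)‖} := by
    rintro ω ⟨t, -, htn, ht⟩
    refine ⟨t, ht.trans_eq ?_⟩
    congr! 3 with i hi
    simp only [ξ, if_pos ((Finset.mem_range.1 hi).trans_le htn)]
  rw [← ofReal_measureReal]
  exact ENNReal.ofReal_le_ofReal ((measureReal_mono hsub).trans
    (hY.measureReal_exists_le_norm_le_bennett hξ hB (pow_pos hC 2) hvariation hr))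

theorem stmt_6
    {H : Type*} [NormedAddCommGroup H] [InnerProductSpace ℝ H] [CompleteSpace H]
    [SecondCountableTopology H]
    {Ω : Type*} {m0 : MeasurableSpace Ω} {μ : Measure Ω} [IsProbabilityMeasure μ]
    (ℱ : Filtration ℕ m0)
    (X : ℕ → Ω → H) (ε : ℕ → Ω → ℝ)
    (hX : ∀ t, 1 ≤ t → StronglyMeasurable[ℱ (t - 1)] (X t))
    (hεmeas : ∀ t, 1 ≤ t → StronglyMeasurable[ℱ t] (ε t))
    (hεint : ∀ t, 1 ≤ t → Integrable (ε t) μ)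
    (hε0 : ∀ t, 1 ≤ t → μ[ε t | ℱ (t - 1)] =ᵐ[μ] 0)
    (ρ : ℝ) (hρ : 0 < ρ)
    (Q Qinv : ℕ → Ω → H →L[ℝ] H)
    (hQpos : ∀ t ω, (Q t ω).IsPositive)
    (hQsq : ∀ t ω, Q t ω ∘L Q t ω =
      ρ • (1 : H →L[ℝ] H) + ∑ i ∈ Finset.Icc 1 t, outerProd (X i ω))
    (hQinv : ∀ t ω, Qinv t ω ∘L Q t ω = 1 ∧ Q t ω ∘L Qinv t ω = 1)
    (n : ℕ) (hn : 1 ≤ n)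
    (B : ℝ) (hB : 0 < B) (σ : ℕ → Ω → ℝ)
    (hσmeas : ∀ t, 1 ≤ t → t ≤ n → StronglyMeasurable[ℱ (t - 1)] (σ t))
    (hbdd : ∀ t, 1 ≤ t → t ≤ n → ∀ᵐ ω ∂μ, |ε t ω| ≤ B)
    (hvar : ∀ t, 1 ≤ t → t ≤ n →
      μ[fun ω => (ε t ω - (μ[ε t | ℱ (t - 1)]) ω) ^ 2 | ℱ (t - 1)] ≤ᵐ[μ]
        fun ω => σ t ω ^ 2)
    (C : ℝ) (hC : 0 < C)
    (hCn : ∀ᵐ ω ∂μ, ∑ i ∈ Finset.Icc 1 n, σ i ω ^ 2 * ‖Qinv i ω (X i ω)‖ ^ 2 ≤ C ^ 2)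
    (r : ℝ) (hr : 0 ≤ r) :
    μ {ω | ∃ t, 1 ≤ t ∧ t ≤ n ∧
        r ≤ ‖Qinv t ω (∑ i ∈ Finset.Icc 1 t, ε i ω • X i ω)‖} ≤
      ENNReal.ofReal (2 * Real.exp (-(C ^ 2 / B ^ 2) *
        ((1 + B * r / C ^ 2) * Real.log (1 + B * r / C ^ 2) - B * r / C ^ 2))) := by
  exact stmt_6_general ℱ X ε hX hεmeas hε0 (ρ • 1) Qinv (fun t ω => isInvSqrt_of_sq_eq
    (hQpos t ω).isSymmetric (hQsq t ω) (hQinv t ω).1 (hQinv t ω).2) n B hB σ hbdd hvar C hC hCn r hr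
end

section
/- Suppose |ε_t| ≤ B almost surely and Var(ε_t | F_{t-1}) ≤ σ_t² for all t ≥ 1, with σ_t F_{t-1}-measurable and B > 0. Let s_t = ‖(ρI + V_t)^{-1/2} M_t‖ and ν_t = Σ_{i=1}^t σ_i² ‖G_i‖². For a > 0 and x ≥ 0 let γ̄(a, x) = (∫_x^∞ u^{a−1} e^{−u} du) / Γ(a) denote the regularized upper incomplete gamma function. Then for any θ > 0 and δ ∈ (0,1), with probability at least 1 − δ it holds simultaneously for all t ≥ 1 that [ (θ/B²)^{θ/B²} / ( Γ(θ/B²) · γ̄(θ/B², θ/B²) ) ] · [ Γ((B s_t + ν_t + θ)/B²) · γ̄((B s_t + ν_t + θ)/B², (ν_t + θ)/B²) / ((ν_t + θ)/B²)^{(B s_t + ν_t + θ)/B²} ] · exp(ν_t / B²) < 2/δ. -/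
open MeasureTheory Filter Real
open scoped RealInnerProductSpace

noncomputable def upperGammaReg (a x : ℝ) : ℝ :=
  (∫ u in Set.Ioi x, u ^ (a - 1) * Real.exp (-u)) / Real.Gamma a

noncomputable def mixedBennettExpr (B θ ν s : ℝ) : ℝ :=
  ((θ / B ^ 2) ^ (θ / B ^ 2) /
      (Real.Gamma (θ / B ^ 2) * upperGammaReg (θ / B ^ 2) (θ / B ^ 2))) *
    (Real.Gamma ((B * s + ν + θ) / B ^ 2) *
        upperGammaReg ((B * s + ν + θ) / B ^ 2) ((ν + θ) / B ^ 2) /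
      ((ν + θ) / B ^ 2) ^ ((B * s + ν + θ) / B ^ 2)) *
    Real.exp (ν / B ^ 2)

/-!
Pinelis' argument in a Hilbert space: `cosh z` is convex in `z²`, so the conditional expectation of
`cosh (l ‖m + e g‖ / B)` is at most `cosh (l ‖m‖ / B) * (1 + σ² ‖g‖² (eˡ - 1 - l) / B²)` when `e`
is centred, bounded by `B`, of conditional variance at most `σ²`, and `‖g‖ ≤ 1`. The operator
`(ρI + V t)^(-1/2)` is predictable, shrinks every vector as `t` grows, and gives `‖G t‖ ≤ 1`. Hence
`cosh (l s t / B) * exp (-(eˡ - 1 - l) ν t / B²)` is a supermartingale for every scale `l ≥ 0`.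

Now mix over `l = log u`, where `u` is a Gamma variable of shape and rate `θ / B²` conditioned on
`u > 1`. With `exp (l s t / B)` in place of `cosh (l s t / B)` the mixture is exactly the Gamma
expression, and `eˣ ≤ 2 cosh x`; Ville's inequality for the mixed supermartingale concludes.
-/

open ProbabilityTheory
open scoped ENNReal

/-! ### Pinelis' inequality -/

/-- The function `ψ(l) = eˡ - 1 - l` of Bennett's inequality. -/
noncomputable def bennettPsi (l : ℝ) : ℝ := exp l - 1 - l

lemma bennettPsi_nonneg (l : ℝ) : 0 ≤ bennettPsi l := by
  have := add_one_le_exp l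
  unfold bennettPsi
  linarith

lemma bennettPsi_log {u : ℝ} (hu : 0 < u) : bennettPsi (log u) = u - 1 - log u := by
  rw [bennettPsi, exp_log hu]

@[fun_prop]
lemma continuous_bennettPsi : Continuous bennettPsi := by
  unfold bennettPsi
  fun_prop

lemma hasSum_bennettPsi (l : ℝ) :
    HasSum (fun n : ℕ => l ^ (n + 2) / (n + 2).factorial) (bennettPsi l) := by
  have hexp : HasSum (fun n : ℕ => l ^ n / n.factorial) (exp l) := by
    rw [exp_eq_exp_ℝ]
    exact NormedSpace.expSeries_div_hasSum_exp l
  simpa [bennettPsi, Finset.sum_range_succ, sub_sub] using (hasSum_nat_add_iff' 2).mpr hexp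

lemma bennettPsi_mul_le {k l : ℝ} (hk₀ : 0 ≤ k) (hk₁ : k ≤ 1) (hl : 0 ≤ l) :
    bennettPsi (k * l) ≤ k ^ 2 * bennettPsi l := by
  refine hasSum_le (fun n => ?_) (hasSum_bennettPsi (k * l)) ((hasSum_bennettPsi l).mul_left _)
  have : k ^ (n + 2) ≤ k ^ 2 := pow_le_pow_of_le_one hk₀ hk₁ (by lia)
  rw [mul_pow, mul_div_assoc]
  gcongr

/-- All coefficients of `cosh z = ∑ (z²)ⁿ / (2n)!` are nonnegative, so `cosh` is convex in `z²`. -/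
lemma cosh_le_of_sq_eq {x y z c : ℝ} (hc₀ : 0 ≤ c) (hc₁ : c ≤ 1)
    (hz : z ^ 2 = (1 - c) * x ^ 2 + c * y ^ 2) :
    cosh z ≤ (1 - c) * cosh x + c * cosh y := by
  refine hasSum_le (fun n => ?_) (hasSum_cosh z)
    (((hasSum_cosh x).mul_left (1 - c)).add ((hasSum_cosh y).mul_left c))
  have hpow : (z ^ 2) ^ n ≤ (1 - c) * (x ^ 2) ^ n + c * (y ^ 2) ^ n := by
    rw [hz]
    exact (convexOn_pow n).2 (sq_nonneg x) (sq_nonneg y) (sub_nonneg.2 hc₁) hc₀ (by ring)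
  rw [pow_mul, pow_mul, pow_mul, mul_div_assoc', mul_div_assoc', ← add_div]
  gcongr

lemma cosh_le_of_sq_eq_add {r p q z : ℝ} (hr : 0 ≤ r) (hpq : |p| ≤ q)
    (hz : z ^ 2 = r ^ 2 + 2 * (r * p) + q ^ 2) :
    cosh z ≤ cosh r + sinh r * p + cosh r * bennettPsi q := by
  rcases ((abs_nonneg p).trans hpq).eq_or_lt with rfl | hq
  · obtain rfl : p = 0 := abs_nonpos_iff.1 hpq
    have hzr : |z| = |r| := (sq_eq_sq_iff_abs_eq_abs z r).1 (by linarith)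
    simp [bennettPsi, ← cosh_abs z, hzr]
  obtain ⟨hqp, hpq⟩ := abs_le.1 hpq
  obtain ⟨c, hc⟩ : ∃ c, p = (2 * c - 1) * q := ⟨(p + q) / (2 * q), by field_simp; ring⟩
  have hc₀ : 0 ≤ c := by nlinarith
  have hc₁ : c ≤ 1 := by nlinarith
  have hsinh_q : 0 ≤ sinh q - q := sub_nonneg.2 (self_le_sinh_iff.2 hq.le)
  have hsinh_r : 0 ≤ sinh r := sinh_nonneg_iff.2 hr
  have hsinh_cosh : 0 ≤ cosh r - sinh r := sub_nonneg.2 (sinh_lt_cosh r).le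
  calc cosh z ≤ (1 - c) * cosh (r - q) + c * cosh (r + q) :=
        cosh_le_of_sq_eq hc₀ hc₁ (by rw [hz, hc]; ring)
    _ = cosh r * cosh q + (2 * c - 1) * (sinh r * sinh q) := by
        rw [cosh_add, cosh_sub]; ring
    _ ≤ cosh r + sinh r * p + cosh r * bennettPsi q := by
        rw [hc, bennettPsi, ← cosh_add_sinh q]
        nlinarith [mul_nonneg (mul_nonneg hc₀ hsinh_q) hsinh_cosh,
          mul_nonneg (mul_nonneg (sub_nonneg.2 hc₁) hsinh_q)
            (add_nonneg hsinh_r (cosh_pos r).le)]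

section InnerProductSpace

variable {E : Type*} [NormedAddCommGroup E] [InnerProductSpace ℝ E]

lemma abs_inner_div_norm_le (u v : E) : |⟪u, v⟫ / ‖u‖| ≤ ‖v‖ := by
  rw [abs_div, abs_norm]
  refine div_le_of_le_mul₀ (norm_nonneg _) (norm_nonneg _) ?_
  rw [mul_comm]
  exact abs_real_inner_le_norm u v

lemma norm_mul_inner_div_norm (u v : E) : ‖u‖ * (⟪u, v⟫ / ‖u‖) = ⟪u, v⟫ := by
  rcases eq_or_ne u 0 with rfl | hu
  · simp
  · exact mul_div_cancel₀ _ (norm_ne_zero_iff.2 hu)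

lemma cosh_norm_add_le_s7 (u v : E) :
    cosh ‖u + v‖ ≤ cosh ‖u‖ + sinh ‖u‖ * (⟪u, v⟫ / ‖u‖) + cosh ‖u‖ * bennettPsi ‖v‖ := by
  refine cosh_le_of_sq_eq_add (norm_nonneg u) (abs_inner_div_norm_le u v) ?_
  rw [norm_mul_inner_div_norm, norm_add_sq_real]

lemma cosh_norm_add_smul_le {l B e : ℝ} {m g : E} (hl : 0 ≤ l) (hB : 0 < B) (he : |e| ≤ B)
    (hg : ‖g‖ ≤ 1) :
    cosh (l * ‖m + e • g‖ / B) ≤ cosh (l * ‖m‖ / B) *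
      (1 + tanh (l * ‖m‖ / B) * (l / B * (⟪m, g⟫ / ‖m‖)) * e +
        ‖g‖ ^ 2 * bennettPsi l / B ^ 2 * e ^ 2) := by
  have hlB : 0 ≤ l / B := by positivity
  have hnorm (w : E) : ‖(l / B) • w‖ = l * ‖w‖ / B := by
    rw [norm_smul, norm_of_nonneg hlB, div_mul_eq_mul_div]
  have hinner : ⟪(l / B) • m, (l / B) • e • g⟫ / (l * ‖m‖ / B) = l / B * (⟪m, g⟫ / ‖m‖) * e := by
    rcases hl.eq_or_lt with rfl | hl
    · simp
    rw [real_inner_smul_left, real_inner_smul_right, real_inner_smul_right]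
    field_simp
  have hpsi : bennettPsi (l * ‖e • g‖ / B) ≤ ‖g‖ ^ 2 * bennettPsi l / B ^ 2 * e ^ 2 := by
    have hk : |e| * ‖g‖ / B ≤ 1 :=
      (div_le_one hB).2 ((mul_le_of_le_one_right (abs_nonneg e) hg).trans he)
    calc bennettPsi (l * ‖e • g‖ / B) = bennettPsi (|e| * ‖g‖ / B * l) := by
          rw [norm_smul, norm_eq_abs]; ring_nf
      _ ≤ (|e| * ‖g‖ / B) ^ 2 * bennettPsi l := bennettPsi_mul_le (by positivity) hk hl
      _ = ‖g‖ ^ 2 * bennettPsi l / B ^ 2 * e ^ 2 := by rw [div_pow, mul_pow, sq_abs]; ring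
  have hpinelis := cosh_norm_add_le_s7 ((l / B) • m) ((l / B) • e • g)
  rw [← smul_add, hnorm, hnorm, hnorm, hinner] at hpinelis
  calc cosh (l * ‖m + e • g‖ / B)
      ≤ cosh (l * ‖m‖ / B) + sinh (l * ‖m‖ / B) * (l / B * (⟪m, g⟫ / ‖m‖) * e) +
        cosh (l * ‖m‖ / B) * (‖g‖ ^ 2 * bennettPsi l / B ^ 2 * e ^ 2) :=
        hpinelis.trans (by gcongr)
    _ = _ := by
        rw [tanh_eq_sinh_div_cosh]
        have := (cosh_pos (l * ‖m‖ / B)).ne'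
        field_simp

end InnerProductSpace

/-! ### Inverse square roots under rank-one updates -/

section Operators

variable {E : Type*} [NormedAddCommGroup E] [InnerProductSpace ℝ E]
  {Q Q' P P' : E →L[ℝ] E}

lemma inner_apply_apply_of_comp_eq_one (hQ : Q.IsSymmetric) (hQP : Q ∘L P = 1) (u v : E) :
    ⟪P u, P v⟫ = ⟪u, P (P v)⟫ := by
  have hQP (z : E) : Q (P z) = z := DFunLike.congr_fun hQP z
  simpa [hQP] using (hQ (P u) (P (P v))).symm

lemma norm_apply_sq_of_comp_eq_add_outerProd {x : E} (hQ : Q.IsSymmetric) (hQ' : Q'.IsSymmetric)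
    (h : Q' ∘L Q' = Q ∘L Q + outerProd x) (z : E) :
    ‖Q' z‖ ^ 2 = ‖Q z‖ ^ 2 + ⟪x, z⟫ ^ 2 := by
  have hz : Q' (Q' z) = Q (Q z) + ⟪x, z⟫ • x := DFunLike.congr_fun h z
  calc ‖Q' z‖ ^ 2 = ⟪z, Q' (Q' z)⟫ := by rw [← real_inner_self_eq_norm_sq]; exact hQ' z (Q' z)
    _ = ⟪z, Q (Q z)⟫ + ⟪x, z⟫ ^ 2 := by
        rw [hz, inner_add_right, real_inner_smul_right, real_inner_comm z x, sq]
    _ = ‖Q z‖ ^ 2 + ⟪x, z⟫ ^ 2 := by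
        rw [← real_inner_self_eq_norm_sq (Q z)]; congr 1; exact (hQ z (Q z)).symm

lemma norm_inverse_apply_le_of_norm_apply_le (hQ : Q.IsSymmetric) (hQ' : Q'.IsSymmetric)
    (hQP : Q ∘L P = 1) (hQP' : Q' ∘L P' = 1) (h : ∀ z, ‖Q z‖ ≤ ‖Q' z‖) (y : E) :
    ‖P' y‖ ≤ ‖P y‖ := by
  have hy : Q (P y) = y := DFunLike.congr_fun hQP y
  have hy' : Q' (P' (P' y)) = P' y := DFunLike.congr_fun hQP' (P' y)
  have : ‖P' y‖ * ‖P' y‖ ≤ ‖P y‖ * ‖P' y‖ :=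
    calc ‖P' y‖ * ‖P' y‖ = ⟪Q (P y), P' (P' y)⟫ := by
          rw [hy, ← inner_apply_apply_of_comp_eq_one hQ' hQP', real_inner_self_eq_norm_mul_norm]
      _ = ⟪P y, Q (P' (P' y))⟫ := hQ _ _
      _ ≤ ‖P y‖ * ‖Q (P' (P' y))‖ := real_inner_le_norm _ _
      _ ≤ ‖P y‖ * ‖P' y‖ := by
          gcongr
          exact (h _).trans_eq (congrArg norm hy')
  rcases (norm_nonneg (P' y)).eq_or_lt with h₀ | h₀
  · rw [← h₀]
    exact norm_nonneg _
  · exact le_of_mul_le_mul_right this h₀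

lemma norm_inverse_apply_le_one (hQ : Q.IsSymmetric) (hQP : Q ∘L P = 1) {x : E}
    (h : ∀ z, ⟪x, z⟫ ≤ ‖Q z‖) : ‖P x‖ ≤ 1 := by
  have hx : Q (P (P x)) = P x := DFunLike.congr_fun hQP (P x)
  have : ‖P x‖ * ‖P x‖ ≤ ‖P x‖ := by
    rw [← real_inner_self_eq_norm_mul_norm, inner_apply_apply_of_comp_eq_one hQ hQP]
    exact (h _).trans_eq (congrArg norm hx)
  nlinarith [norm_nonneg (P x)]

lemma norm_inverse_apply_le_of_comp_eq_add_outerProd {x : E} (hQ : Q.IsSymmetric)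
    (hQ' : Q'.IsSymmetric) (hQP : Q ∘L P = 1) (hQP' : Q' ∘L P' = 1)
    (h : Q' ∘L Q' = Q ∘L Q + outerProd x) (y : E) : ‖P' y‖ ≤ ‖P y‖ := by
  refine norm_inverse_apply_le_of_norm_apply_le hQ hQ' hQP hQP' (fun z => ?_) y
  rw [← sq_le_sq₀ (norm_nonneg _) (norm_nonneg _),
    norm_apply_sq_of_comp_eq_add_outerProd hQ hQ' h z]
  exact le_add_of_nonneg_right (sq_nonneg _)

lemma norm_inverse_apply_le_one_of_comp_eq_add_outerProd {x : E} (hQ : Q.IsSymmetric)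
    (hQ' : Q'.IsSymmetric) (hQP' : Q' ∘L P' = 1)
    (h : Q' ∘L Q' = Q ∘L Q + outerProd x) : ‖P' x‖ ≤ 1 := by
  refine norm_inverse_apply_le_one hQ' hQP' fun z => ?_
  refine le_of_sq_le_sq ?_ (norm_nonneg _)
  rw [norm_apply_sq_of_comp_eq_add_outerProd hQ hQ' h z]
  exact le_add_of_nonneg_left (sq_nonneg _)

lemma continuous_outerProd : Continuous (outerProd : E → E →L[ℝ] E) := by
  change Continuous fun x : E => ContinuousLinearMap.smulRightL ℝ E E (innerSL ℝ x) x
  fun_prop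

end Operators

section OperatorMeasurability

lemma stronglyMeasurable_comp_of_continuousAt {α β γ : Type*} [MeasurableSpace α]
    [TopologicalSpace β] [TopologicalSpace γ] {f : α → β} {g : β → γ} (hf : StronglyMeasurable f)
    (hg : ∀ a, ContinuousAt g (f a)) : StronglyMeasurable fun a => g (f a) :=
  ⟨fun n => (hf.approx n).map g, fun a => (hg a).tendsto.comp (hf.tendsto_approx a)⟩

lemma stronglyMeasurable_of_mul_eq_one {α R : Type*} [MeasurableSpace α] [NormedRing R]
    [HasSummableGeomSeries R] {f g : α → R} (hf : StronglyMeasurable f)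
    (hfg : ∀ a, f a * g a = 1) (hgf : ∀ a, g a * f a = 1) : StronglyMeasurable g := by
  let unit (a : α) : Rˣ := ⟨f a, g a, hfg a, hgf a⟩
  have hg : g = fun a => Ring.inverse (f a) := funext fun a => (Ring.inverse_unit (unit a)).symm
  rw [hg]
  exact stronglyMeasurable_comp_of_continuousAt hf fun a =>
    NormedRing.inverse_continuousAt (unit a)

variable {Ω H : Type*} {m : MeasurableSpace Ω} [NormedAddCommGroup H] [InnerProductSpace ℝ H]
  [CompleteSpace H] {Q P : Ω → H →L[ℝ] H}

lemma measurable_inner_inverse_apply (hQ : ∀ ω, (Q ω).IsSymmetric)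
    (hQP : ∀ ω, Q ω ∘L P ω = 1) (hPQ : ∀ ω, P ω ∘L Q ω = 1)
    (hQQ : StronglyMeasurable fun ω => Q ω ∘L Q ω) {Y Z : Ω → H} (hY : StronglyMeasurable Y)
    (hZ : StronglyMeasurable Z) : Measurable fun ω => ⟪P ω (Y ω), P ω (Z ω)⟫ := by
  have hsq {S T : H →L[ℝ] H} (h : S * T = 1) : S * S * (T * T) = 1 := by
    rw [mul_assoc, ← mul_assoc S T T, h, one_mul, h]
  have hPP : StronglyMeasurable fun ω => P ω ∘L P ω :=
    stronglyMeasurable_of_mul_eq_one hQQ (fun ω => hsq (hQP ω)) fun ω => hsq (hPQ ω)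
  have hPPZ : StronglyMeasurable fun ω => P ω (P ω (Z ω)) :=
    isBoundedBilinearMap_apply.continuous.comp_stronglyMeasurable (hPP.prodMk hZ)
  simp only [inner_apply_apply_of_comp_eq_one (hQ _) (hQP _)]
  exact (hY.inner hPPZ).measurable

lemma measurable_norm_inverse_apply (hQ : ∀ ω, (Q ω).IsSymmetric)
    (hQP : ∀ ω, Q ω ∘L P ω = 1) (hPQ : ∀ ω, P ω ∘L Q ω = 1)
    (hQQ : StronglyMeasurable fun ω => Q ω ∘L Q ω) {Y : Ω → H} (hY : StronglyMeasurable Y) :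
    Measurable fun ω => ‖P ω (Y ω)‖ := by
  simp only [norm_eq_sqrt_real_inner]
  exact (measurable_inner_inverse_apply hQ hQP hPQ hQQ hY hY).sqrt

end OperatorMeasurability

/-! ### Ville's inequality -/

section Supermartingale

variable {Ω : Type*} {m0 : MeasurableSpace Ω}

/-- A supermartingale with values in `ℝ≥0∞`. The conditional inequality is stated through integrals
over `ℱ n`-measurable sets, a form which needs no integrability and is preserved by mixing. -/
structure LSupermartingale (Z : ℕ → Ω → ℝ≥0∞) (ℱ : Filtration ℕ m0) (μ : Measure Ω) : Prop where
  measurable (n : ℕ) : Measurable[ℱ n] (Z n)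
  setLIntegral_succ_le (n : ℕ) {A : Set Ω} (hA : MeasurableSet[ℱ n] A) :
    ∫⁻ ω in A, Z (n + 1) ω ∂μ ≤ ∫⁻ ω in A, Z n ω ∂μ

namespace LSupermartingale

variable {ℱ : Filtration ℕ m0} {μ : Measure Ω} {Z : ℕ → Ω → ℝ≥0∞}

lemma mul_measure_exists_lt_le (hZ : LSupermartingale Z ℱ μ) (c : ℝ≥0∞) (n m : ℕ) {A : Set Ω}
    (hA : MeasurableSet[ℱ m] A) :
    c * μ (A ∩ {ω | ∃ k < n, c ≤ Z (m + k) ω}) ≤ ∫⁻ ω in A, Z m ω ∂μ := by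
  induction n generalizing m A with
  | zero => simp
  | succ n ih =>
    set S := {ω | c ≤ Z m ω}
    have hS : MeasurableSet[ℱ m] S := hZ.measurable m measurableSet_Ici
    have hsplit : A ∩ {ω | ∃ k < n + 1, c ≤ Z (m + k) ω} ⊆
        S ∩ A ∪ A \ S ∩ {ω | ∃ k < n, c ≤ Z (m + 1 + k) ω} := by
      rintro ω ⟨hωA, k, hk, hck⟩
      by_cases hωS : ω ∈ S
      · exact Or.inl ⟨hωS, hωA⟩
      · obtain ⟨k, rfl⟩ : ∃ j, k = j + 1 :=
          Nat.exists_eq_succ_of_ne_zero (by rintro rfl; exact hωS hck)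
        exact Or.inr ⟨⟨hωA, hωS⟩, k, by lia, by rwa [add_right_comm, add_assoc]⟩
    have hmarkov : c * μ (S ∩ A) ≤ ∫⁻ ω in A ∩ S, Z m ω ∂μ := by
      rw [← setLIntegral_const, Set.inter_comm]
      exact setLIntegral_mono ((hZ.measurable m).mono (ℱ.le m) le_rfl) fun ω hω => hω.2
    calc c * μ (A ∩ {ω | ∃ k < n + 1, c ≤ Z (m + k) ω})
        ≤ c * μ (S ∩ A) + c * μ (A \ S ∩ {ω | ∃ k < n, c ≤ Z (m + 1 + k) ω}) := by
          rw [← mul_add]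
          gcongr
          exact (measure_mono hsplit).trans (measure_union_le _ _)
      _ ≤ ∫⁻ ω in A ∩ S, Z m ω ∂μ + ∫⁻ ω in A \ S, Z (m + 1) ω ∂μ :=
          add_le_add hmarkov (ih (m + 1) (ℱ.mono (Nat.le_succ m) _ (hA.diff hS)))
      _ ≤ ∫⁻ ω in A ∩ S, Z m ω ∂μ + ∫⁻ ω in A \ S, Z m ω ∂μ := by
          gcongr _ + ?_
          exact hZ.setLIntegral_succ_le m (hA.diff hS)
      _ = ∫⁻ ω in A, Z m ω ∂μ := lintegral_inter_add_sdiff _ A (ℱ.le m _ hS)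

theorem ville_inequality (hZ : LSupermartingale Z ℱ μ) (c : ℝ≥0∞) :
    c * μ {ω | ∃ n, c ≤ Z n ω} ≤ ∫⁻ ω, Z 0 ω ∂μ := by
  have hUnion : {ω | ∃ n, c ≤ Z n ω} = ⋃ n, {ω | ∃ k < n, c ≤ Z k ω} := by
    ext ω
    simp only [Set.mem_ofPred_eq, Set.mem_iUnion]
    exact ⟨fun ⟨n, hn⟩ => ⟨n + 1, n, n.lt_succ_self, hn⟩, fun ⟨_, k, _, hk⟩ => ⟨k, hk⟩⟩
  have hmono : Monotone fun n => {ω | ∃ k < n, c ≤ Z k ω} :=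
    fun _ _ hij _ ⟨k, hk, hck⟩ => ⟨k, hk.trans_le hij, hck⟩
  rw [hUnion, hmono.measure_iUnion, ENNReal.mul_iSup]
  refine iSup_le fun n => ?_
  simpa using hZ.mul_measure_exists_lt_le c n 0 MeasurableSet.univ

lemma ofReal_one_sub_le_measure_forall_lt [IsProbabilityMeasure μ] (hZ : LSupermartingale Z ℱ μ)
    (hZ₀ : ∫⁻ ω, Z 0 ω ∂μ ≤ 1) {δ : ℝ} (hδ : 0 < δ) :
    ENNReal.ofReal (1 - δ) ≤ μ {ω | ∀ n, Z n ω < ENNReal.ofReal (1 / δ)} := by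
  set c := ENNReal.ofReal (1 / δ) with hc
  have hZm (n : ℕ) : Measurable (Z n) := (hZ.measurable n).mono (ℱ.le n) le_rfl
  have hmeas : MeasurableSet {ω | ∃ n, c ≤ Z n ω} := by
    simp only [Set.ofPred_exists]
    exact .iUnion fun n => hZm n measurableSet_Ici
  have hδc : ENNReal.ofReal δ * c = 1 := by
    rw [hc, ← ENNReal.ofReal_mul hδ.le, mul_one_div_cancel hδ.ne', ENNReal.ofReal_one]
  have hbad : μ {ω | ∃ n, c ≤ Z n ω} ≤ ENNReal.ofReal δ :=
    calc μ {ω | ∃ n, c ≤ Z n ω} = ENNReal.ofReal δ * (c * μ {ω | ∃ n, c ≤ Z n ω}) := by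
          rw [← mul_assoc, hδc, one_mul]
      _ ≤ ENNReal.ofReal δ := mul_le_of_le_one_right' ((hZ.ville_inequality c).trans hZ₀)
  have hcompl : {ω | ∀ n, Z n ω < c} = {ω | ∃ n, c ≤ Z n ω}ᶜ := by ext; simp
  rw [hcompl, prob_compl_eq_one_sub hmeas, ENNReal.ofReal_sub _ hδ.le, ENNReal.ofReal_one]
  gcongr

lemma mixture [SFinite μ] {Λ : Type*} [MeasurableSpace Λ] {ν : Measure Λ} [SFinite ν]
    {Z : Λ → ℕ → Ω → ℝ≥0∞} (hZ : ∀ᵐ l ∂ν, LSupermartingale (Z l) ℱ μ)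
    (hmeas : ∀ n, Measurable[(ℱ n).prod inferInstance] fun p : Ω × Λ => Z p.2 n p.1) :
    LSupermartingale (fun n ω => ∫⁻ l, Z l n ω ∂ν) ℱ μ where
  measurable n := by
    let := ℱ n
    exact (hmeas n).lintegral_prod_right'
  setLIntegral_succ_le n A hA := by
    have hswap (k : ℕ) :
        ∫⁻ ω in A, ∫⁻ l, Z l k ω ∂ν ∂μ = ∫⁻ l, ∫⁻ ω in A, Z l k ω ∂μ ∂ν :=
      lintegral_lintegral_swap ((hmeas k).mono
        (sup_le_sup (MeasurableSpace.comap_mono (ℱ.le k)) le_rfl) le_rfl).aemeasurable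
    rw [hswap, hswap]
    exact lintegral_mono_ae (hZ.mono fun l hl => hl.setLIntegral_succ_le n hA)

end LSupermartingale

end Supermartingale

section ConditionalExpectation

variable {Ω : Type*} {m m0 : MeasurableSpace Ω} {μ : Measure Ω}

lemma setLIntegral_mul_le_of_forall_setLIntegral_le (hm : m ≤ m0) {f g w : Ω → ℝ≥0∞}
    (hf : AEMeasurable f μ) (hg : AEMeasurable g μ) (hw : Measurable[m] w)
    (hfg : ∀ A, MeasurableSet[m] A → ∫⁻ ω in A, f ω ∂μ ≤ ∫⁻ ω in A, g ω ∂μ) {A : Set Ω}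
    (hA : MeasurableSet[m] A) :
    ∫⁻ ω in A, w ω * f ω ∂μ ≤ ∫⁻ ω in A, w ω * g ω ∂μ := by
  have hdensity {h : Ω → ℝ≥0∞} (hh : AEMeasurable h μ) : ∫⁻ ω in A, w ω * h ω ∂μ =
      ∫⁻ ω, w ω ∂((μ.restrict A).withDensity h).trim hm := by
    rw [lintegral_trim hm hw, lintegral_withDensity_eq_lintegral_mul₀ hh.restrict
      (hw.mono hm le_rfl).aemeasurable]
    simp only [Pi.mul_apply, mul_comm]
  rw [hdensity hf, hdensity hg]
  refine lintegral_mono' (Measure.le_iff.2 fun S hS => ?_) le_rfl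
  rw [trim_measurableSet_eq hm hS, trim_measurableSet_eq hm hS, withDensity_apply _ (hm S hS),
    withDensity_apply _ (hm S hS), Measure.restrict_restrict (hm S hS)]
  exact hfg _ (hS.inter hA)

lemma setLIntegral_mul_ofReal_le_of_condExp_le [IsFiniteMeasure μ] (hm : m ≤ m0) {f g : Ω → ℝ}
    {w : Ω → ℝ≥0∞} (hf : Integrable f μ) (hf₀ : 0 ≤ᵐ[μ] f) (hfg : μ[f | m] ≤ᵐ[μ] g)
    (hw : Measurable[m] w) {A : Set Ω} (hA : MeasurableSet[m] A) :
    ∫⁻ ω in A, w ω * ENNReal.ofReal (f ω) ∂μ ≤ ∫⁻ ω in A, w ω * ENNReal.ofReal (g ω) ∂μ := by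
  have hcond (S : Set Ω) (hS : MeasurableSet[m] S) :
      ∫⁻ ω in S, ENNReal.ofReal (f ω) ∂μ = ∫⁻ ω in S, ENNReal.ofReal (μ[f | m] ω) ∂μ := by
    rw [← setLIntegral_condLExp hm μ _ hS]
    exact lintegral_congr_ae (ae_restrict_of_ae (condLExp_ofReal m hf hf₀))
  calc ∫⁻ ω in A, w ω * ENNReal.ofReal (f ω) ∂μ
      ≤ ∫⁻ ω in A, w ω * ENNReal.ofReal (μ[f | m] ω) ∂μ :=
        setLIntegral_mul_le_of_forall_setLIntegral_le hm hf.aemeasurable.ennreal_ofReal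
          integrable_condExp.aemeasurable.ennreal_ofReal hw (fun S hS => (hcond S hS).le) hA
    _ ≤ ∫⁻ ω in A, w ω * ENNReal.ofReal (g ω) ∂μ := by
        refine lintegral_mono_ae (ae_restrict_of_ae (hfg.mono fun ω hω => ?_))
        gcongr

variable [IsFiniteMeasure μ] {b c e s : Ω → ℝ} {B Kb Kc : ℝ}

lemma integrable_sq_of_abs_le (he : AEStronglyMeasurable e μ) (heB : ∀ᵐ ω ∂μ, |e ω| ≤ B) :
    Integrable (e ^ 2) μ := by
  refine .of_bound (he.pow 2) (B ^ 2) (heB.mono fun ω hω => ?_)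
  rw [Pi.pow_apply, norm_pow, norm_eq_abs]
  gcongr

lemma integrable_one_add_mul_add_mul_sq (hb : AEStronglyMeasurable b μ)
    (hc : AEStronglyMeasurable c μ) (hbK : ∀ ω, ‖b ω‖ ≤ Kb) (hcK : ∀ ω, ‖c ω‖ ≤ Kc)
    (he : AEStronglyMeasurable e μ) (heB : ∀ᵐ ω ∂μ, |e ω| ≤ B) :
    Integrable (1 + b * e + c * e ^ 2) μ :=
  ((integrable_const 1).add ((Integrable.of_bound he B heB).bdd_mul hb (ae_of_all _ hbK))).add
    ((integrable_sq_of_abs_le he heB).bdd_mul hc (ae_of_all _ hcK))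

lemma condExp_one_add_mul_add_mul_sq_le (hm : m ≤ m0) (hb : StronglyMeasurable[m] b)
    (hc : StronglyMeasurable[m] c) (hbK : ∀ ω, ‖b ω‖ ≤ Kb) (hcK : ∀ ω, ‖c ω‖ ≤ Kc)
    (hc₀ : ∀ ω, 0 ≤ c ω) (he : AEStronglyMeasurable e μ) (heB : ∀ᵐ ω ∂μ, |e ω| ≤ B)
    (he₀ : μ[e | m] =ᵐ[μ] 0) (hes : μ[e ^ 2 | m] ≤ᵐ[μ] s) :
    μ[1 + b * e + c * e ^ 2 | m] ≤ᵐ[μ] 1 + c * s := by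
  have hint : Integrable e μ := .of_bound he B heB
  have hint_sq := integrable_sq_of_abs_le he heB
  have hint_b := hint.bdd_mul (hb.mono hm).aestronglyMeasurable (ae_of_all _ hbK)
  have hint_c := hint_sq.bdd_mul (hc.mono hm).aestronglyMeasurable (ae_of_all _ hcK)
  have hone : μ[(1 : Ω → ℝ) | m] = 1 := condExp_const hm 1
  filter_upwards [condExp_add ((integrable_const 1).add hint_b) hint_c m,
    condExp_add (integrable_const 1) hint_b m,
    condExp_mul_of_stronglyMeasurable_left hb hint_b hint,
    condExp_mul_of_stronglyMeasurable_left hc hint_c hint_sq, he₀, hes]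
    with ω hadd hadd' hpull_b hpull_c he₀ hes
  have hcs := mul_le_mul_of_nonneg_left hes (hc₀ ω)
  calc μ[1 + b * e + c * e ^ 2 | m] ω
      = μ[(1 : Ω → ℝ) | m] ω + μ[b * e | m] ω + μ[c * e ^ 2 | m] ω :=
        hadd.trans (congrArg (· + μ[c * e ^ 2 | m] ω) hadd')
    _ = 1 + b ω * μ[e | m] ω + c ω * μ[e ^ 2 | m] ω := by
        rw [hone, hpull_b, hpull_c, Pi.one_apply, Pi.mul_apply, Pi.mul_apply]
    _ ≤ 1 + c ω * s ω := by rw [he₀]; simpa using hcs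

lemma setLIntegral_ofReal_le_of_le_mul_one_add_mul_add_mul_sq (hm : m ≤ m0) {f w : Ω → ℝ}
    (hf₀ : ∀ ω, 0 ≤ f ω) (hw : Measurable[m] w) (hw₀ : ∀ ω, 0 < w ω) (hb : Measurable[m] b)
    (hc : Measurable[m] c) (hbK : ∀ ω, ‖b ω‖ ≤ Kb) (hcK : ∀ ω, ‖c ω‖ ≤ Kc) (hc₀ : ∀ ω, 0 ≤ c ω)
    (he : AEStronglyMeasurable e μ) (heB : ∀ᵐ ω ∂μ, |e ω| ≤ B) (he₀ : μ[e | m] =ᵐ[μ] 0)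
    (hes : μ[e ^ 2 | m] ≤ᵐ[μ] s) (hf : ∀ᵐ ω ∂μ, f ω ≤ w ω * (1 + b ω * e ω + c ω * e ω ^ 2))
    {A : Set Ω} (hA : MeasurableSet[m] A) :
    ∫⁻ ω in A, ENNReal.ofReal (f ω) ∂μ ≤ ∫⁻ ω in A, ENNReal.ofReal (w ω * (1 + c ω * s ω)) ∂μ := by
  have hint : Integrable (1 + b * e + c * e ^ 2) μ :=
    integrable_one_add_mul_add_mul_sq (hb.mono hm le_rfl).aestronglyMeasurable
      (hc.mono hm le_rfl).aestronglyMeasurable hbK hcK he heB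
  have hcond := condExp_one_add_mul_add_mul_sq_le hm hb.stronglyMeasurable hc.stronglyMeasurable
    hbK hcK hc₀ he heB he₀ hes
  have hnonneg : 0 ≤ᵐ[μ] 1 + b * e + c * e ^ 2 := hf.mono fun ω hω =>
    (mul_nonneg_iff_of_pos_left (hw₀ ω)).1 ((hf₀ ω).trans hω)
  calc ∫⁻ ω in A, ENNReal.ofReal (f ω) ∂μ
      ≤ ∫⁻ ω in A, ENNReal.ofReal (w ω) * ENNReal.ofReal (1 + b ω * e ω + c ω * e ω ^ 2) ∂μ := by
        refine lintegral_mono_ae (ae_restrict_of_ae (hf.mono fun ω hω => ?_))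
        rw [← ENNReal.ofReal_mul (hw₀ ω).le]
        exact ENNReal.ofReal_le_ofReal hω
    _ ≤ ∫⁻ ω in A, ENNReal.ofReal (w ω) * ENNReal.ofReal (1 + c ω * s ω) ∂μ :=
        setLIntegral_mul_ofReal_le_of_condExp_le hm hint hnonneg hcond hw.ennreal_ofReal hA
    _ = ∫⁻ ω in A, ENNReal.ofReal (w ω * (1 + c ω * s ω)) ∂μ := by
        simp only [← ENNReal.ofReal_mul (hw₀ _).le]

end ConditionalExpectation

/-! ### The supermartingale at a fixed scale -/

/-- Pinelis' supermartingale at scale `l`, as a function of the norm `s` of the martingale and of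
its variance proxy `ν`. -/
noncomputable def coshBennett (B l s ν : ℝ) : ℝ :=
  cosh (l * s / B) * exp (-(ν / B ^ 2 * bennettPsi l))

lemma measurable_coshBennett {α : Type*} {_ : MeasurableSpace α} (B : ℝ) {f g h : α → ℝ}
    (hf : Measurable f) (hg : Measurable g) (hh : Measurable h) :
    Measurable fun a => coshBennett B (f a) (g a) (h a) :=
  (((hf.mul hg).div_const B).cosh).mul
    ((hh.div_const _).mul (continuous_bennettPsi.measurable.comp hf)).neg.exp

lemma coshBennett_pos (B l s ν : ℝ) : 0 < coshBennett B l s ν :=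
  mul_pos (cosh_pos _) (exp_pos _)

lemma coshBennett_le_coshBennett {B l s s' : ℝ} (hB : 0 ≤ B) (hl : 0 ≤ l) (hs : 0 ≤ s)
    (hss' : s ≤ s') (ν : ℝ) : coshBennett B l s ν ≤ coshBennett B l s' ν := by
  have hs' : 0 ≤ s' := hs.trans hss'
  have : cosh (l * s / B) ≤ cosh (l * s' / B) := by
    rw [cosh_le_cosh, abs_of_nonneg (by positivity), abs_of_nonneg (by positivity)]
    gcongr
  unfold coshBennett
  gcongr

lemma coshBennett_add_mul_one_add_le (B l s ν κ : ℝ) :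
    coshBennett B l s (ν + κ) * (1 + κ * bennettPsi l / B ^ 2) ≤ coshBennett B l s ν := by
  have hsplit : coshBennett B l s (ν + κ) =
      coshBennett B l s ν * exp (-(κ * bennettPsi l / B ^ 2)) := by
    rw [coshBennett, coshBennett, mul_assoc, ← exp_add]
    ring_nf
  have hexp : exp (-(κ * bennettPsi l / B ^ 2)) * (1 + κ * bennettPsi l / B ^ 2) ≤ 1 := by
    rw [exp_neg, inv_mul_le_one₀ (exp_pos _), add_comm]
    exact add_one_le_exp _
  rw [hsplit, mul_assoc]
  exact mul_le_of_le_one_right (coshBennett_pos B l s ν).le hexp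

lemma coshBennett_norm_add_smul_le {E : Type*} [NormedAddCommGroup E] [InnerProductSpace ℝ E]
    {l B e : ℝ} {m g : E} (hl : 0 ≤ l) (hB : 0 < B) (he : |e| ≤ B) (hg : ‖g‖ ≤ 1) (ν : ℝ) :
    coshBennett B l ‖m + e • g‖ ν ≤ coshBennett B l ‖m‖ ν *
      (1 + tanh (l * ‖m‖ / B) * (l / B * (⟪m, g⟫ / ‖m‖)) * e +
        ‖g‖ ^ 2 * bennettPsi l / B ^ 2 * e ^ 2) := by
  rw [coshBennett, coshBennett, mul_right_comm]
  gcongr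
  exact cosh_norm_add_smul_le hl hB he hg

lemma abs_tanh_mul_inner_div_norm_le {E : Type*} [NormedAddCommGroup E] [InnerProductSpace ℝ E]
    {g : E} (hg : ‖g‖ ≤ 1) {k : ℝ} (hk : 0 ≤ k) (x : ℝ) (m : E) :
    |tanh x * (k * (⟪m, g⟫ / ‖m‖))| ≤ k := by
  have hinner : |⟪m, g⟫ / ‖m‖| ≤ 1 := (abs_inner_div_norm_le m g).trans hg
  rw [abs_mul, abs_mul, abs_of_nonneg hk]
  calc |tanh x| * (k * |⟪m, g⟫ / ‖m‖|) ≤ 1 * (k * 1) := by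
        gcongr
        exact (abs_tanh_lt_one x).le
    _ = k := by rw [one_mul, mul_one]

lemma measurable_tanh : Measurable tanh := by
  simp only [funext tanh_eq_sinh_div_cosh]
  fun_prop

lemma setLIntegral_coshBennett_add_smul_le {Ω E : Type*} {m m0 : MeasurableSpace Ω}
    {μ : Measure Ω} [IsFiniteMeasure μ] [NormedAddCommGroup E] [InnerProductSpace ℝ E]
    (hm : m ≤ m0) {M G : Ω → E} {e σ ν : Ω → ℝ} {l B : ℝ} (hl : 0 ≤ l) (hB : 0 < B)
    (hM : Measurable[m] fun ω => ‖M ω‖) (hG : Measurable[m] fun ω => ‖G ω‖)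
    (hMG : Measurable[m] fun ω => ⟪M ω, G ω⟫) (hν : Measurable[m] ν) (hσ : Measurable[m] σ)
    (hG₁ : ∀ ω, ‖G ω‖ ≤ 1) (he : AEStronglyMeasurable e μ) (heB : ∀ᵐ ω ∂μ, |e ω| ≤ B)
    (he₀ : μ[e | m] =ᵐ[μ] 0) (heσ : μ[e ^ 2 | m] ≤ᵐ[μ] σ ^ 2) {A : Set Ω}
    (hA : MeasurableSet[m] A) :
    ∫⁻ ω in A, ENNReal.ofReal
        (coshBennett B l ‖M ω + e ω • G ω‖ (ν ω + σ ω ^ 2 * ‖G ω‖ ^ 2)) ∂μ ≤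
      ∫⁻ ω in A, ENNReal.ofReal (coshBennett B l ‖M ω‖ (ν ω)) ∂μ := by
  have hψ := bennettPsi_nonneg l
  have hw : Measurable[m] fun ω => coshBennett B l ‖M ω‖ (ν ω + σ ω ^ 2 * ‖G ω‖ ^ 2) :=
    measurable_coshBennett B measurable_const hM (hν.add ((hσ.pow_const 2).mul (hG.pow_const 2)))
  have hb : Measurable[m] fun ω => tanh (l * ‖M ω‖ / B) * (l / B * (⟪M ω, G ω⟫ / ‖M ω‖)) :=
    (measurable_tanh.comp ((hM.const_mul l).div_const B)).mul ((hMG.div hM).const_mul (l / B))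
  have hc : Measurable[m] fun ω => ‖G ω‖ ^ 2 * bennettPsi l / B ^ 2 :=
    ((hG.pow_const 2).mul_const _).div_const _
  have hcK (ω : Ω) : ‖‖G ω‖ ^ 2 * bennettPsi l / B ^ 2‖ ≤ bennettPsi l / B ^ 2 := by
    rw [norm_of_nonneg (by positivity)]
    gcongr
    exact mul_le_of_le_one_left hψ (pow_le_one₀ (norm_nonneg _) (hG₁ ω))
  refine (setLIntegral_ofReal_le_of_le_mul_one_add_mul_add_mul_sq hm
    (fun ω => (coshBennett_pos _ _ _ _).le) hw (fun ω => coshBennett_pos _ _ _ _) hb hc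
    (fun ω => abs_tanh_mul_inner_div_norm_le (hG₁ ω) (by positivity) _ _) hcK
    (fun ω => by positivity) he heB he₀ heσ
    (heB.mono fun ω hω => coshBennett_norm_add_smul_le hl hB hω (hG₁ ω) _) hA).trans ?_
  refine lintegral_mono fun ω => ENNReal.ofReal_le_ofReal ?_
  convert coshBennett_add_mul_one_add_le B l ‖M ω‖ (ν ω) (σ ω ^ 2 * ‖G ω‖ ^ 2) using 2
  rw [Pi.pow_apply]
  ring

/-! ### Mixing over the scale -/

lemma setIntegral_Ioi_one_rpow_mul_exp {k r : ℝ} (hk : 0 < k) (hr : 0 < r) :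
    ∫ u in Set.Ioi 1, u ^ (k - 1) * exp (-(r * u)) = Gamma k * upperGammaReg k r / r ^ k := by
  have hsubst := integral_comp_mul_left_Ioi (fun t => t ^ (k - 1) * exp (-t)) 1 hr
  have hscale : ∫ u in Set.Ioi 1, (r * u) ^ (k - 1) * exp (-(r * u)) =
      r ^ (k - 1) * ∫ u in Set.Ioi 1, u ^ (k - 1) * exp (-(r * u)) := by
    rw [← integral_const_mul]
    refine setIntegral_congr_fun measurableSet_Ioi fun u hu => ?_
    simp only [mul_rpow hr.le (zero_le_one.trans (Set.mem_Ioi.1 hu).le), mul_assoc]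
  rw [hscale, mul_one, smul_eq_mul, rpow_sub_one hr.ne'] at hsubst
  have hrk := (rpow_pos_of_pos hr k).ne'
  rw [upperGammaReg, mul_div_cancel₀ _ (Gamma_pos_of_pos hk).ne']
  field_simp at hsubst ⊢
  linarith

lemma measurable_gammaPDF (a r : ℝ) : Measurable (gammaPDF a r) :=
  (measurable_gammaPDFReal a r).ennreal_ofReal

lemma setIntegral_gammaMeasure {a r : ℝ} (ha : 0 < a) (hr : 0 < r) (f : ℝ → ℝ) {s : Set ℝ}
    (hs : MeasurableSet s) (hs₀ : s ⊆ Set.Ici 0) :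
    ∫ u in s, f u ∂gammaMeasure a r =
      r ^ a / Gamma a * ∫ u in s, u ^ (a - 1) * exp (-(r * u)) * f u := by
  rw [gammaMeasure, setIntegral_withDensity_eq_setIntegral_toReal_smul
    (measurable_gammaPDF a r) (by simp [gammaPDF]) f hs, ← integral_const_mul]
  refine setIntegral_congr_fun hs fun u hu => ?_
  simp only [gammaPDF, ENNReal.toReal_ofReal (gammaPDFReal_nonneg ha hr u), smul_eq_mul]
  rw [gammaPDFReal, if_pos (Set.mem_Ici.1 (hs₀ hu))]
  ring

lemma gammaMeasure_real_Ioi_one {a r : ℝ} (ha : 0 < a) (hr : 0 < r) :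
    (gammaMeasure a r).real (Set.Ioi 1) = upperGammaReg a r := by
  have h := setIntegral_gammaMeasure ha hr (fun _ => 1) measurableSet_Ioi
    (Set.Ioi_subset_Ici zero_le_one)
  simp only [setIntegral_const, smul_eq_mul, mul_one, setIntegral_Ioi_one_rpow_mul_exp ha hr] at h
  have hΓ := (Gamma_pos_of_pos ha).ne'
  have hra := (rpow_pos_of_pos hr a).ne'
  rw [h]
  field_simp

/-- The law of a Gamma variable with shape and rate `a`, conditioned on exceeding `1`. Its logarithm
is the random scale `l > 0` over which the supermartingales are mixed. -/
noncomputable def truncatedGamma (a : ℝ) : Measure ℝ :=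
  ProbabilityTheory.cond (gammaMeasure a a) (Set.Ioi 1)

lemma isProbabilityMeasure_truncatedGamma {a : ℝ} (ha : 0 < a) :
    IsProbabilityMeasure (truncatedGamma a) := by
  have := isProbabilityMeasure_gammaMeasure ha ha
  refine cond_isProbabilityMeasure ?_
  have hpos : {u | gammaPDF a a u ≠ 0} ∩ Set.Ioi 1 = Set.Ioi 1 :=
    Set.inter_eq_right.2 fun u hu => by
      simpa [gammaPDF] using gammaPDFReal_pos ha ha (zero_lt_one.trans hu)
  rw [gammaMeasure, Ne, withDensity_apply_eq_zero (measurable_gammaPDF a a)]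
  simp [hpos]

lemma integral_truncatedGamma {a : ℝ} (ha : 0 < a) (f : ℝ → ℝ) :
    ∫ u, f u ∂truncatedGamma a = a ^ a / (Gamma a * upperGammaReg a a) *
      ∫ u in Set.Ioi 1, u ^ (a - 1) * exp (-(a * u)) * f u := by
  rw [truncatedGamma, ProbabilityTheory.cond, integral_smul_measure, smul_eq_mul,
    setIntegral_gammaMeasure ha ha f measurableSet_Ioi (Set.Ioi_subset_Ici zero_le_one),
    ENNReal.toReal_inv, ← measureReal_def, gammaMeasure_real_Ioi_one ha ha]
  ring

lemma integral_truncatedGamma_rpow_mul_exp {a p v : ℝ} (ha : 0 < a) (hp : 0 ≤ p) (hv : 0 ≤ v) :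
    ∫ u, u ^ p * exp (-(v * (u - 1 - log u))) ∂truncatedGamma a =
      a ^ a / (Gamma a * upperGammaReg a a) *
        (Gamma (p + v + a) * upperGammaReg (p + v + a) (v + a) / (v + a) ^ (p + v + a)) *
        exp v := by
  rw [integral_truncatedGamma ha,
    ← setIntegral_Ioi_one_rpow_mul_exp (by positivity) (by positivity), mul_assoc,
    ← integral_mul_const]
  congr 1
  refine setIntegral_congr_fun measurableSet_Ioi fun u hu => ?_
  have hu₀ : 0 < u := zero_lt_one.trans hu
  simp only [rpow_def_of_pos hu₀, ← exp_add]
  ring_nf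

lemma exp_mul_exp_le_two_mul_coshBennett (B l s ν : ℝ) :
    exp (l * s / B) * exp (-(ν / B ^ 2 * bennettPsi l)) ≤ 2 * coshBennett B l s ν := by
  have : exp (l * s / B) ≤ 2 * cosh (l * s / B) := by
    rw [cosh_eq]
    linarith [exp_pos (-(l * s / B))]
  rw [coshBennett, ← mul_assoc]
  gcongr

lemma mixedBennettExpr_eq_integral {B θ ν s : ℝ} (hB : 0 < B) (hθ : 0 < θ) (hν : 0 ≤ ν)
    (hs : 0 ≤ s) :
    mixedBennettExpr B θ ν s = ∫ u, exp (log u * s / B) *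
      exp (-(ν / B ^ 2 * bennettPsi (log u))) ∂truncatedGamma (θ / B ^ 2) := by
  have hshape : s / B + ν / B ^ 2 + θ / B ^ 2 = (B * s + ν + θ) / B ^ 2 := by field_simp
  rw [mixedBennettExpr, ← hshape, add_div, ← integral_truncatedGamma_rpow_mul_exp (by positivity)
    (by positivity) (by positivity)]
  refine integral_congr_ae ?_
  filter_upwards [ProbabilityTheory.ae_cond_mem measurableSet_Ioi] with u hu
  have hu₀ : 0 < u := zero_lt_one.trans hu
  rw [bennettPsi_log hu₀, rpow_def_of_pos hu₀, mul_div_assoc]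

lemma mixedBennettExpr_lt {B θ ν s δ : ℝ} (hB : 0 < B) (hθ : 0 < θ) (hν : 0 ≤ ν) (hs : 0 ≤ s)
    (h : ∫⁻ u, ENNReal.ofReal (coshBennett B (log u) s ν) ∂truncatedGamma (θ / B ^ 2) <
      ENNReal.ofReal (1 / δ)) :
    mixedBennettExpr B θ ν s < 2 / δ := by
  rw [mixedBennettExpr_eq_integral hB hθ hν hs, integral_eq_lintegral_of_nonneg_ae
    (ae_of_all _ fun u => by positivity) (by unfold bennettPsi; fun_prop)]
  refine ENNReal.toReal_lt_of_lt_ofReal ?_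
  calc ∫⁻ u, ENNReal.ofReal (exp (log u * s / B) * exp (-(ν / B ^ 2 * bennettPsi (log u))))
        ∂truncatedGamma (θ / B ^ 2)
      ≤ ∫⁻ u, 2 * ENNReal.ofReal (coshBennett B (log u) s ν) ∂truncatedGamma (θ / B ^ 2) := by
        refine lintegral_mono fun u => ?_
        rw [← ENNReal.ofReal_ofNat, ← ENNReal.ofReal_mul zero_le_two]
        exact ENNReal.ofReal_le_ofReal (exp_mul_exp_le_two_mul_coshBennett B (log u) s ν)
    _ = 2 * ∫⁻ u, ENNReal.ofReal (coshBennett B (log u) s ν) ∂truncatedGamma (θ / B ^ 2) :=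
        lintegral_const_mul' _ _ ENNReal.ofNat_ne_top
    _ < 2 * ENNReal.ofReal (1 / δ) := by gcongr; exact ENNReal.ofNat_ne_top
    _ = ENNReal.ofReal (2 / δ) := by
        rw [← ENNReal.ofReal_ofNat, ← ENNReal.ofReal_mul zero_le_two, mul_one_div]

/-! ### Self-normalized martingales -/

section SelfNormalized

variable {H : Type*} [NormedAddCommGroup H] [InnerProductSpace ℝ H] {Ω : Type*}
  {m0 : MeasurableSpace Ω}

/-- `X` is a predictable process and `Q t` is a symmetric square root, with inverse `P t`, of the
regularized design operator `T + V t`, where `V t = ∑ i ≤ t, X i X iᵀ`. -/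
structure PredictableDesign (ℱ : Filtration ℕ m0) (X : ℕ → Ω → H) (T : H →L[ℝ] H)
    (Q P : ℕ → Ω → H →L[ℝ] H) : Prop where
  stronglyMeasurable (t : ℕ) (ht : 1 ≤ t) : StronglyMeasurable[ℱ (t - 1)] (X t)
  isSymmetric (t : ℕ) (ω : Ω) : (Q t ω).IsSymmetric
  comp_self (t : ℕ) (ω : Ω) : Q t ω ∘L Q t ω = T + ∑ i ∈ Finset.Icc 1 t, outerProd (X i ω)
  inverse (t : ℕ) (ω : Ω) : P t ω ∘L Q t ω = 1 ∧ Q t ω ∘L P t ω = 1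

/-- `ε` is a sequence of martingale differences bounded by `B`, whose conditional variance given the
past is at most the square of the predictable process `σ`. -/
structure BoundedNoise (ℱ : Filtration ℕ m0) (μ : Measure Ω) (ε σ : ℕ → Ω → ℝ) (B : ℝ) : Prop where
  stronglyMeasurable (t : ℕ) (ht : 1 ≤ t) : StronglyMeasurable[ℱ t] (ε t)
  stronglyMeasurable_proxy (t : ℕ) (ht : 1 ≤ t) : StronglyMeasurable[ℱ (t - 1)] (σ t)
  abs_le (t : ℕ) (ht : 1 ≤ t) : ∀ᵐ ω ∂μ, |ε t ω| ≤ B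
  condExp_eq_zero (t : ℕ) (ht : 1 ≤ t) : μ[ε t | ℱ (t - 1)] =ᵐ[μ] 0
  condVar_le (t : ℕ) (ht : 1 ≤ t) : Var[ε t; μ | ℱ (t - 1)] ≤ᵐ[μ] σ t ^ 2

/-- The vector-valued martingale `M t = ∑ i ≤ t, ε i X i`. -/
def noiseSum (X : ℕ → Ω → H) (ε : ℕ → Ω → ℝ) (t : ℕ) (ω : Ω) : H :=
  ∑ i ∈ Finset.Icc 1 t, ε i ω • X i ω

/-- The variance proxy `ν t = ∑ i ≤ t, σ i ² ‖G i‖²`, where `G i = P i (X i)`. -/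
def varianceProxy (P : ℕ → Ω → H →L[ℝ] H) (X : ℕ → Ω → H) (σ : ℕ → Ω → ℝ) (t : ℕ) (ω : Ω) : ℝ :=
  ∑ i ∈ Finset.Icc 1 t, σ i ω ^ 2 * ‖P i ω (X i ω)‖ ^ 2

lemma noiseSum_succ (X : ℕ → Ω → H) (ε : ℕ → Ω → ℝ) (n : ℕ) (ω : Ω) :
    noiseSum X ε (n + 1) ω = noiseSum X ε n ω + ε (n + 1) ω • X (n + 1) ω :=
  Finset.sum_Icc_succ_top (by lia) _

lemma varianceProxy_succ (P : ℕ → Ω → H →L[ℝ] H) (X : ℕ → Ω → H) (σ : ℕ → Ω → ℝ) (n : ℕ) (ω : Ω) :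
    varianceProxy P X σ (n + 1) ω =
      varianceProxy P X σ n ω + σ (n + 1) ω ^ 2 * ‖P (n + 1) ω (X (n + 1) ω)‖ ^ 2 :=
  Finset.sum_Icc_succ_top (by lia) _

lemma varianceProxy_nonneg (P : ℕ → Ω → H →L[ℝ] H) (X : ℕ → Ω → H) (σ : ℕ → Ω → ℝ) (t : ℕ) (ω : Ω) :
    0 ≤ varianceProxy P X σ t ω :=
  Finset.sum_nonneg fun _ _ => by positivity

variable {ℱ : Filtration ℕ m0} {μ : Measure Ω} {X : ℕ → Ω → H} {T : H →L[ℝ] H}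
  {Q P : ℕ → Ω → H →L[ℝ] H} {ε σ : ℕ → Ω → ℝ} {B : ℝ}

lemma BoundedNoise.condExp_sq_le (noise : BoundedNoise ℱ μ ε σ B) {t : ℕ} (ht : 1 ≤ t) :
    μ[ε t ^ 2 | ℱ (t - 1)] ≤ᵐ[μ] σ t ^ 2 := by
  refine (condExp_congr_ae ?_).trans_le (noise.condVar_le t ht)
  filter_upwards [noise.condExp_eq_zero t ht] with ω hω
  simp [hω]

namespace PredictableDesign

lemma comp_self_succ (design : PredictableDesign ℱ X T Q P) (n : ℕ) (ω : Ω) :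
    Q (n + 1) ω ∘L Q (n + 1) ω = Q n ω ∘L Q n ω + outerProd (X (n + 1) ω) := by
  rw [design.comp_self, design.comp_self, Finset.sum_Icc_succ_top (by lia), add_assoc]

lemma norm_inverse_succ_apply_le (design : PredictableDesign ℱ X T Q P) (n : ℕ) (ω : Ω) (y : H) :
    ‖P (n + 1) ω y‖ ≤ ‖P n ω y‖ :=
  norm_inverse_apply_le_of_comp_eq_add_outerProd (design.isSymmetric _ _) (design.isSymmetric _ _)
    (design.inverse _ _).2 (design.inverse _ _).2 (design.comp_self_succ n ω) y

lemma norm_inverse_succ_apply_le_one (design : PredictableDesign ℱ X T Q P) (n : ℕ) (ω : Ω) :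
    ‖P (n + 1) ω (X (n + 1) ω)‖ ≤ 1 :=
  norm_inverse_apply_le_one_of_comp_eq_add_outerProd (design.isSymmetric _ _)
    (design.isSymmetric _ _) (design.inverse _ _).2 (design.comp_self_succ n ω)

lemma stronglyMeasurable_comp_self (design : PredictableDesign ℱ X T Q P) {k n : ℕ}
    (hkn : k ≤ n + 1) : StronglyMeasurable[ℱ n] fun ω => Q k ω ∘L Q k ω := by
  simp only [design.comp_self]
  refine stronglyMeasurable_const.add (Finset.stronglyMeasurable_fun_sum _ fun i hi => ?_)
  obtain ⟨hi, hik⟩ := Finset.mem_Icc.1 hi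
  exact continuous_outerProd.comp_stronglyMeasurable
    ((design.stronglyMeasurable i hi).mono (ℱ.mono (by lia)))

lemma stronglyMeasurable_noiseSum (design : PredictableDesign ℱ X T Q P)
    (noise : BoundedNoise ℱ μ ε σ B) (n : ℕ) : StronglyMeasurable[ℱ n] (noiseSum X ε n) := by
  refine Finset.stronglyMeasurable_fun_sum _ fun i hi => ?_
  obtain ⟨hi, hin⟩ := Finset.mem_Icc.1 hi
  exact ((noise.stronglyMeasurable i hi).mono (ℱ.mono hin)).smul
    ((design.stronglyMeasurable i hi).mono (ℱ.mono (by lia)))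

variable [CompleteSpace H]

lemma measurable_norm_inverse_apply (design : PredictableDesign ℱ X T Q P) {k n : ℕ}
    (hkn : k ≤ n + 1) {Y : Ω → H} (hY : StronglyMeasurable[ℱ n] Y) :
    Measurable[ℱ n] fun ω => ‖P k ω (Y ω)‖ :=
  _root_.measurable_norm_inverse_apply (design.isSymmetric k) (fun ω => (design.inverse k ω).2)
    (fun ω => (design.inverse k ω).1) (design.stronglyMeasurable_comp_self hkn) hY

lemma measurable_varianceProxy (design : PredictableDesign ℱ X T Q P)
    (noise : BoundedNoise ℱ μ ε σ B) (n : ℕ) : Measurable[ℱ n] (varianceProxy P X σ n) := by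
  refine Finset.measurable_fun_sum _ fun i hi => ?_
  obtain ⟨hi, hin⟩ := Finset.mem_Icc.1 hi
  have hpast : ℱ (i - 1) ≤ ℱ n := ℱ.mono (by lia)
  exact (((noise.stronglyMeasurable_proxy i hi).mono hpast).measurable.pow_const 2).mul
    ((design.measurable_norm_inverse_apply (by lia)
      ((design.stronglyMeasurable i hi).mono hpast)).pow_const 2)

lemma measurable_norm_noiseSum (design : PredictableDesign ℱ X T Q P)
    (noise : BoundedNoise ℱ μ ε σ B) (n : ℕ) :
    Measurable[ℱ n] fun ω => ‖P n ω (noiseSum X ε n ω)‖ :=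
  design.measurable_norm_inverse_apply n.le_succ (design.stronglyMeasurable_noiseSum noise n)

lemma setLIntegral_coshBennett_succ_le [IsFiniteMeasure μ] (design : PredictableDesign ℱ X T Q P)
    (noise : BoundedNoise ℱ μ ε σ B) (hB : 0 < B) {l : ℝ} (hl : 0 ≤ l) (n : ℕ) {A : Set Ω}
    (hA : MeasurableSet[ℱ n] A) :
    ∫⁻ ω in A, ENNReal.ofReal (coshBennett B l ‖P (n + 1) ω (noiseSum X ε (n + 1) ω)‖
        (varianceProxy P X σ (n + 1) ω)) ∂μ ≤
      ∫⁻ ω in A, ENNReal.ofReal (coshBennett B l ‖P n ω (noiseSum X ε n ω)‖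
        (varianceProxy P X σ n ω)) ∂μ := by
  have hn : 1 ≤ n + 1 := n.succ_pos
  have hM := design.stronglyMeasurable_noiseSum noise n
  have hX : StronglyMeasurable[ℱ n] (X (n + 1)) := design.stronglyMeasurable (n + 1) hn
  simp only [noiseSum_succ, varianceProxy_succ, map_add, map_smul]
  calc ∫⁻ ω in A, ENNReal.ofReal (coshBennett B l
          ‖P (n + 1) ω (noiseSum X ε n ω) + ε (n + 1) ω • P (n + 1) ω (X (n + 1) ω)‖
          (varianceProxy P X σ n ω + σ (n + 1) ω ^ 2 * ‖P (n + 1) ω (X (n + 1) ω)‖ ^ 2)) ∂μ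
      ≤ ∫⁻ ω in A, ENNReal.ofReal (coshBennett B l ‖P (n + 1) ω (noiseSum X ε n ω)‖
          (varianceProxy P X σ n ω)) ∂μ :=
        setLIntegral_coshBennett_add_smul_le (ℱ.le n) hl hB
          (design.measurable_norm_inverse_apply le_rfl hM)
          (design.measurable_norm_inverse_apply le_rfl hX)
          (measurable_inner_inverse_apply (design.isSymmetric _)
            (fun ω => (design.inverse _ ω).2) (fun ω => (design.inverse _ ω).1)
            (design.stronglyMeasurable_comp_self le_rfl) hM hX)
          (design.measurable_varianceProxy noise n)
          (noise.stronglyMeasurable_proxy (n + 1) hn).measurable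
          (design.norm_inverse_succ_apply_le_one n)
          ((noise.stronglyMeasurable (n + 1) hn).mono (ℱ.le _)).aestronglyMeasurable
          (noise.abs_le (n + 1) hn) (noise.condExp_eq_zero (n + 1) hn) (noise.condExp_sq_le hn) hA
    _ ≤ ∫⁻ ω in A, ENNReal.ofReal (coshBennett B l ‖P n ω (noiseSum X ε n ω)‖
          (varianceProxy P X σ n ω)) ∂μ :=
        lintegral_mono fun ω => ENNReal.ofReal_le_ofReal <| coshBennett_le_coshBennett hB.le hl
          (norm_nonneg _) (design.norm_inverse_succ_apply_le n ω _) _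

theorem lsupermartingale_coshBennett [IsFiniteMeasure μ] (design : PredictableDesign ℱ X T Q P)
    (noise : BoundedNoise ℱ μ ε σ B) (hB : 0 < B) {l : ℝ} (hl : 0 ≤ l) :
    LSupermartingale (fun n ω => ENNReal.ofReal
      (coshBennett B l ‖P n ω (noiseSum X ε n ω)‖ (varianceProxy P X σ n ω))) ℱ μ where
  measurable n := (measurable_coshBennett B measurable_const
    (design.measurable_norm_noiseSum noise n)
    (design.measurable_varianceProxy noise n)).ennreal_ofReal
  setLIntegral_succ_le n _ hA := design.setLIntegral_coshBennett_succ_le noise hB hl n hA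

theorem lsupermartingale_lintegral_coshBennett [IsFiniteMeasure μ]
    (design : PredictableDesign ℱ X T Q P) (noise : BoundedNoise ℱ μ ε σ B) (hB : 0 < B)
    {η : Measure ℝ} [SFinite η] (hη : ∀ᵐ u ∂η, 1 ≤ u) :
    LSupermartingale (fun n ω => ∫⁻ u, ENNReal.ofReal (coshBennett B (log u)
      ‖P n ω (noiseSum X ε n ω)‖ (varianceProxy P X σ n ω)) ∂η) ℱ μ :=
  .mixture (hη.mono fun _ hu => design.lsupermartingale_coshBennett noise hB (log_nonneg hu))
    fun n => by
      let := ℱ n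
      exact (measurable_coshBennett B (measurable_log.comp measurable_snd)
        ((design.measurable_norm_noiseSum noise n).comp measurable_fst)
        ((design.measurable_varianceProxy noise n).comp measurable_fst)).ennreal_ofReal

end PredictableDesign

end SelfNormalized

theorem stmt_7_general {H : Type*} [NormedAddCommGroup H] [InnerProductSpace ℝ H] [CompleteSpace H]
    {Ω : Type*} {m0 : MeasurableSpace Ω} {μ : Measure Ω} [IsProbabilityMeasure μ]
    {ℱ : Filtration ℕ m0} {X : ℕ → Ω → H} {T : H →L[ℝ] H} {Q P : ℕ → Ω → H →L[ℝ] H}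
    {ε σ : ℕ → Ω → ℝ} {B θ δ : ℝ} (design : PredictableDesign ℱ X T Q P)
    (noise : BoundedNoise ℱ μ ε σ B) (hB : 0 < B) (hθ : 0 < θ) (hδ : 0 < δ) :
    ENNReal.ofReal (1 - δ) ≤ μ {ω | ∀ t, 1 ≤ t →
      mixedBennettExpr B θ (varianceProxy P X σ t ω) ‖P t ω (noiseSum X ε t ω)‖ < 2 / δ} := by
  have := isProbabilityMeasure_truncatedGamma (a := θ / B ^ 2) (by positivity)
  have hsuper := design.lsupermartingale_lintegral_coshBennett noise hB
    (η := truncatedGamma (θ / B ^ 2))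
    ((ae_cond_mem measurableSet_Ioi).mono fun _ hu => (Set.mem_Ioi.1 hu).le)
  have hinit : ∫⁻ ω, ∫⁻ u, ENNReal.ofReal (coshBennett B (log u) ‖P 0 ω (noiseSum X ε 0 ω)‖
      (varianceProxy P X σ 0 ω)) ∂truncatedGamma (θ / B ^ 2) ∂μ = 1 := by
    simp [coshBennett, noiseSum, varianceProxy]
  refine (hsuper.ofReal_one_sub_le_measure_forall_lt hinit.le hδ).trans
    (measure_mono fun ω hω t _ => ?_)
  exact mixedBennettExpr_lt hB hθ (varianceProxy_nonneg P X σ t ω) (norm_nonneg _) (hω t)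

theorem stmt_7
    {H : Type*} [NormedAddCommGroup H] [InnerProductSpace ℝ H] [CompleteSpace H]
    [SecondCountableTopology H]
    {Ω : Type*} {m0 : MeasurableSpace Ω} {μ : Measure Ω} [IsProbabilityMeasure μ]
    (ℱ : Filtration ℕ m0)
    (X : ℕ → Ω → H) (ε : ℕ → Ω → ℝ)
    (hX : ∀ t, 1 ≤ t → StronglyMeasurable[ℱ (t - 1)] (X t))
    (hεmeas : ∀ t, 1 ≤ t → StronglyMeasurable[ℱ t] (ε t))
    (hεint : ∀ t, 1 ≤ t → Integrable (ε t) μ)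
    (hε0 : ∀ t, 1 ≤ t → μ[ε t | ℱ (t - 1)] =ᵐ[μ] 0)
    (ρ : ℝ) (hρ : 0 < ρ)
    (Q Qinv : ℕ → Ω → H →L[ℝ] H)
    (hQpos : ∀ t ω, (Q t ω).IsPositive)
    (hQsq : ∀ t ω, Q t ω ∘L Q t ω =
      ρ • (1 : H →L[ℝ] H) + ∑ i ∈ Finset.Icc 1 t, outerProd (X i ω))
    (hQinv : ∀ t ω, Qinv t ω ∘L Q t ω = 1 ∧ Q t ω ∘L Qinv t ω = 1)
    (B : ℝ) (hB : 0 < B) (σ : ℕ → Ω → ℝ)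
    (hσmeas : ∀ t, 1 ≤ t → StronglyMeasurable[ℱ (t - 1)] (σ t))
    (hbdd : ∀ t, 1 ≤ t → ∀ᵐ ω ∂μ, |ε t ω| ≤ B)
    (hvar : ∀ t, 1 ≤ t →
      μ[fun ω => (ε t ω - (μ[ε t | ℱ (t - 1)]) ω) ^ 2 | ℱ (t - 1)] ≤ᵐ[μ]
        fun ω => σ t ω ^ 2)
    (θ : ℝ) (hθ : 0 < θ) (δ : ℝ) (hδ : δ ∈ Set.Ioo (0 : ℝ) 1) :
    ENNReal.ofReal (1 - δ) ≤
      μ {ω | ∀ t, 1 ≤ t →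
        mixedBennettExpr B θ
          (∑ i ∈ Finset.Icc 1 t, σ i ω ^ 2 * ‖Qinv i ω (X i ω)‖ ^ 2)
          ‖Qinv t ω (∑ i ∈ Finset.Icc 1 t, ε i ω • X i ω)‖ < 2 / δ} := by
  exact stmt_7_general ⟨hX, fun t ω => (hQpos t ω).isSymmetric, hQsq, hQinv⟩
    ⟨hεmeas, hσmeas, hbdd, hε0, hvar⟩ hB hθ hδ.1
end
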